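/- arXiv:1907.00573 — 13 statements merged into one kernel-verified Lean document; each statement's English description precedes it below -/
import Mathlib

section
/- Let A be a unital C*-algebra, let n ≥ 1, and let p₁, …, pₙ ∈ A be projections with p_i p_j = 0 for i ≠ j and p₁ + ⋯ + pₙ = 1. Let x₁, …, xₙ ∈ A be selfadjoint elements with p_i x_i p_i = x_i for each i. Assume each x_i is invertible in the corner p_i A p_i, i.e. there exists y_i ∈ A with p_i y_i p_i = y_i and x_i y_i = y_i x_i = p_i, and assume that the spectra computed in A satisfy σ(x_i) ∩ σ(x_j) ⊆ {0} whenever i ≠ j. Set x = x₁ + ⋯ + xₙ. Then p₁, …, pₙ and x₁, …, xₙ all belong to C*(x). -/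
/-- Nonzero spectrum of a compression by a commuting idempotent. -/
lemma corner_spectrum_aux {A : Type*} [Ring A] [Algebra ℂ A] (a b p : A)
    (hpp : p * p = p) (h1 : a * p = b) (h2 : p * a = b) (l : ℂ) (hl : l ≠ 0)
    (hb : l ∈ spectrum ℂ b) : l ∈ spectrum ℂ a := by
  by_contra hna
  rw [spectrum.notMem_iff] at hna
  apply hb
  obtain ⟨u, hu⟩ := hna
  have hbp : b * p = b := by rw [← h1, mul_assoc, hpp]
  have hpb : p * b = b := by rw [← h2, ← mul_assoc, hpp]
  have hc : Commute p (u : A) := by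
    rw [hu]
    exact (Algebra.commute_algebraMap_right l p).sub_right (by rw [Commute, SemiconjBy, h1, h2])
  have hci : Commute p ((u⁻¹ : Aˣ) : A) := hc.units_inv_right
  have hup : (algebraMap ℂ A l - b) * p = p * u := by
    rw [hu, mul_sub, sub_mul, hbp, h2, Algebra.commutes]
  have hup2 : p * (algebraMap ℂ A l - b) = u * p := by
    rw [← hc.eq, hu, mul_sub, mul_sub, hpb, h2]
  have hq1 : (algebraMap ℂ A l - b) * (1 - p) = l • (1 - p) := by
    rw [sub_mul, mul_sub b, hbp, mul_one, sub_self, sub_zero, Algebra.smul_def]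
  have hq2 : (1 - p) * (algebraMap ℂ A l - b) = l • (1 - p) := by
    rw [mul_sub, sub_mul 1 p b, hpb, one_mul, sub_self, sub_zero, ← Algebra.commutes,
      Algebra.smul_def]
  refine isUnit_iff_exists.mpr ⟨p * ((u⁻¹ : Aˣ) : A) + l⁻¹ • (1 - p), ?_, ?_⟩
  · rw [mul_add, ← mul_assoc, hup, mul_assoc, Units.mul_inv, mul_smul_comm, hq1, smul_smul,
      inv_mul_cancel₀ hl]
    simp
  · rw [add_mul, hci.eq, mul_assoc, hup2, ← mul_assoc, Units.inv_mul, smul_mul_assoc, hq2,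
      smul_smul, inv_mul_cancel₀ hl]
    simp

/-- The pairs intertwined by a selfadjoint element. -/
def intertwineSub {A : Type*} [CStarAlgebra A] (p : A) (hp : star p = p) :
    StarSubalgebra ℂ (A × A) where
  carrier := {w | w.1 * p = p * w.2 ∧ p * w.1 = w.2 * p}
  mul_mem' := by
    rintro ⟨a, b⟩ ⟨c, d⟩ ⟨h1, h2⟩ ⟨h3, h4⟩
    simp only at h1 h2 h3 h4
    constructor
    · simp only [Prod.mk_mul_mk]
      rw [mul_assoc, h3, ← mul_assoc, h1, mul_assoc]
    · simp only [Prod.mk_mul_mk]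
      rw [← mul_assoc, h2, mul_assoc, h4, mul_assoc]
  add_mem' := by
    rintro ⟨a, b⟩ ⟨c, d⟩ ⟨h1, h2⟩ ⟨h3, h4⟩
    simp only at h1 h2 h3 h4
    constructor <;> simp only [Prod.mk_add_mk, add_mul, mul_add, h1, h2, h3, h4]
  algebraMap_mem' := by
    intro r
    constructor
    · exact Algebra.commutes r p
    · exact (Algebra.commutes r p).symm
  star_mem' := by
    rintro ⟨a, b⟩ ⟨h1, h2⟩
    simp only at h1 h2
    constructor
    · have := congrArg star h2
      simpa [hp] using this
    · have := congrArg star h1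
      simpa [hp] using this

lemma cfc_intertwine {A : Type*} [CStarAlgebra A] (p a b : A) (hp : star p = p)
    (ha : IsSelfAdjoint a) (hb : IsSelfAdjoint b)
    (h1 : a * p = p * b) (h2 : p * a = b * p) (f : ℂ → ℂ) (hf : Continuous f) :
    cfc f a * p = p * cfc f b := by
  have hcl : IsClosed ((intertwineSub p hp : StarSubalgebra ℂ (A × A)) : Set (A × A)) := by
    apply IsClosed.inter
    · exact isClosed_eq (f := fun w : A × A => w.1 * p) (g := fun w : A × A => p * w.2)
        (by fun_prop) (by fun_prop)
    · exact isClosed_eq (f := fun w : A × A => p * w.1) (g := fun w : A × A => w.2 * p)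
        (by fun_prop) (by fun_prop)
  have hn : IsStarNormal ((a, b) : A × A) := by
    have : IsSelfAdjoint ((a, b) : A × A) := Prod.ext ha hb
    exact this.isStarNormal
  have hm : cfc f ((a, b) : A × A) ∈ intertwineSub p hp :=
    cfc_mem (𝕜' := ℂ) (hs := hcl) f (show ((a, b) : A × A) ∈ intertwineSub p hp from ⟨h1, h2⟩)
  have han := ha.isStarNormal
  have hbn := hb.isStarNormal
  have e1 : (cfc f ((a, b) : A × A)).1 = cfc f a :=
    StarAlgHom.map_cfc (StarAlgHom.fst ℂ A A) f (a, b) hf.continuousOn continuous_fst hn han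
  have e2 : (cfc f ((a, b) : A × A)).2 = cfc f b :=
    StarAlgHom.map_cfc (StarAlgHom.snd ℂ A A) f (a, b) hf.continuousOn continuous_snd hn hbn
  have := hm.1
  rwa [e1, e2] at this

/-- In a unital C*-algebra, if `x = x₁ + ⋯ + xₙ` where the `xᵢ` are
selfadjoint elements living in the corners of mutually orthogonal projections summing
to `1`, each invertible in its corner, with pairwise almost-disjoint spectra, then all
the `pᵢ` and `xᵢ` lie in the C*-algebra generated by `x`. -/
theorem corner_pieces_mem_cstar_of_sum
    {A : Type*} [NormedRing A] [StarRing A] [CStarRing A] [CompleteSpace A]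
    [NormedAlgebra ℂ A] [StarModule ℂ A]
    (n : ℕ) (hn : 1 ≤ n) (p x : Fin n → A)
    (hp_sa : ∀ i, star (p i) = p i)
    (hp_idem : ∀ i, p i * p i = p i)
    (hp_orth : ∀ i j, i ≠ j → p i * p j = 0)
    (hp_sum : ∑ i, p i = 1)
    (hx_sa : ∀ i, star (x i) = x i)
    (hx_corner : ∀ i, p i * x i * p i = x i)
    (hx_inv : ∀ i, ∃ y : A, p i * y * p i = y ∧ x i * y = p i ∧ y * x i = p i)
    (hspec : ∀ i j, i ≠ j → spectrum ℂ (x i) ∩ spectrum ℂ (x j) ⊆ {0}) :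
    ∀ i, p i ∈ (StarAlgebra.adjoin ℂ {∑ k, x k}).topologicalClosure ∧
      x i ∈ (StarAlgebra.adjoin ℂ {∑ k, x k}).topologicalClosure := by
  letI : CStarAlgebra A := {}
  have hpx : ∀ i, p i * x i = x i := fun i => by
    conv_lhs => rw [← hx_corner i]
    rw [← mul_assoc, ← mul_assoc, hp_idem, hx_corner]
  have hxp : ∀ i, x i * p i = x i := fun i => by
    conv_lhs => rw [← hx_corner i]
    rw [mul_assoc, hp_idem, hx_corner]
  have hpx0 : ∀ i j, i ≠ j → p i * x j = 0 := fun i j h => by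
    rw [← hpx j, ← mul_assoc, hp_orth i j h, zero_mul]
  have hxp0 : ∀ i j, i ≠ j → x j * p i = 0 := fun i j h => by
    rw [← hxp j, mul_assoc, hp_orth j i h.symm, mul_zero]
  choose y hy1 hy2 hy3 using hx_inv
  have hpy : ∀ i, p i * y i = y i := fun i => by
    conv_lhs => rw [← hy1 i]
    rw [← mul_assoc, ← mul_assoc, hp_idem, hy1]
  have hyp : ∀ i, y i * p i = y i := fun i => by
    conv_lhs => rw [← hy1 i]
    rw [mul_assoc, hp_idem, hy1]
  set X := ∑ k, x k with hX
  have hXp : ∀ j, X * p j = x j := fun j => by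
    rw [hX, Finset.sum_mul, Finset.sum_eq_single j, hxp]
    · intro b _ hb
      exact hxp0 j b hb.symm
    · simp
  have hpX : ∀ j, p j * X = x j := fun j => by
    rw [hX, Finset.mul_sum, Finset.sum_eq_single j, hpx]
    · intro b _ hb
      exact hpx0 j b hb.symm
    · simp
  have hXsa : IsSelfAdjoint X := by
    rw [IsSelfAdjoint, hX, star_sum]
    exact Finset.sum_congr rfl fun i _ => hx_sa i
  have hXu : IsUnit X := by
    refine isUnit_iff_exists.mpr ⟨∑ k, y k, ?_, ?_⟩
    · rw [Finset.mul_sum, ← hp_sum]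
      refine Finset.sum_congr rfl fun i _ => ?_
      rw [← hpy i, ← mul_assoc, hXp, hy2]
    · rw [Finset.sum_mul, ← hp_sum]
      refine Finset.sum_congr rfl fun i _ => ?_
      rw [← hyp i, mul_assoc, hpX, hy3]
  have h0 : (0 : ℂ) ∉ spectrum ℂ X := spectrum.zero_notMem_iff ℂ |>.mpr hXu
  have key : ∀ i, p i ∈ (StarAlgebra.adjoin ℂ {X}).topologicalClosure := by
    intro i
    obtain ⟨g, hg0, hg1, -⟩ := exists_continuous_zero_one_of_isClosed
      (s := ⋃ j : {j // j ≠ i}, spectrum ℂ (x j))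
      (t := spectrum ℂ (x i) ∩ spectrum ℂ X)
      (isClosed_iUnion_of_finite fun j => spectrum.isClosed _)
      ((spectrum.isClosed _).inter (spectrum.isClosed _))
      (by
        rw [Set.disjoint_left]
        rintro l hl ⟨h1, h2⟩
        obtain ⟨⟨j, hj⟩, hl⟩ := Set.mem_iUnion.mp hl
        have h3 : l = 0 := hspec j i hj ⟨hl, h1⟩
        exact h0 (h3 ▸ h2))
    let f : ℂ → ℂ := fun t => ((g t : ℝ) : ℂ)
    have hf : Continuous f := Complex.continuous_ofReal.comp g.continuous
    have hint : ∀ j, cfc f X * p j = p j * cfc f (x j) := fun j =>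
      cfc_intertwine (p j) X (x j) (hp_sa j) hXsa (hx_sa j) (by rw [hXp, hpx])
        (by rw [hpX, hxp]) f hf
    have hi : x i * cfc f (x i) = x i := by
      have hn : IsStarNormal (x i) := IsSelfAdjoint.isStarNormal (hx_sa i)
      conv_lhs => enter [1]; rw [← cfc_id ℂ (x i)]
      rw [← cfc_mul id f (x i) continuousOn_id hf.continuousOn]
      conv_rhs => rw [← cfc_id ℂ (x i)]
      refine cfc_congr fun t ht => ?_
      by_cases h : t = 0
      · simp [h]
      · have := hg1 ⟨ht, corner_spectrum_aux X (x i) (p i) (hp_idem i) (hXp i) (hpX i) t h ht⟩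
        simp [f, this]
    have hj : ∀ j, j ≠ i → cfc f (x j) = 0 := fun j hj => by
      rw [← cfc_zero ℂ (x j)]
      refine cfc_congr fun t ht => ?_
      have := hg0 (Set.mem_iUnion.mpr ⟨⟨j, hj⟩, ht⟩)
      simp [f, this]
    have hfin : cfc f X = p i := by
      rw [← mul_one (cfc f X), ← hp_sum, Finset.mul_sum, Finset.sum_eq_single i]
      · rw [hint, ← hy3, mul_assoc, hi]
      · intro j _ h
        rw [hint, hj j h, mul_zero]
      · simp
    rw [← hfin]
    exact cfc_mem_elemental f X
  intro i
  refine ⟨key i, ?_⟩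
  rw [← hXp i]
  exact mul_mem (subset_closure (StarAlgebra.subset_adjoin ℂ _ (Set.mem_singleton X))) (key i)
end

section
/- Let A be a unital C*-algebra carrying a system of k×k matrix units {e_{ij}}_{1≤i,j≤k}, and let q₁ ∈ A be a projection. Let S = { i ∈ {1,…,k} : e_{ii} q₁ ≠ 0 or q₁ e_{ii} ≠ 0 }. If i₁, …, i_l are l distinct indices in {1, …, k} with l ≥ |S|, then there exists a unitary u of A lying in the linear span of the e_{ij} such that the projection q := u q₁ u* satisfies e_{jj} q = 0 and q e_{jj} = 0 for every j ∉ {i₁, …, i_l}. -/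
/-- Given a system of `k × k` matrix units in a unital C*-algebra and a
projection `q₁`, if `T` is a set of at least `|S|` indices, where `S` is the set of
diagonal matrix units not annihilating `q₁`, then some unitary `u` in the linear span
of the matrix units moves `q₁` to a projection `q = u q₁ u*` supported in `T`. -/
theorem exists_unitary_conjugate_projection_supported
    {A : Type*} [NormedRing A] [StarRing A] [CStarRing A] [CompleteSpace A]
    [NormedAlgebra ℂ A] [StarModule ℂ A]
    (k : ℕ) (e : Fin k → Fin k → A)
    (he_mul : ∀ i j l m, e i j * e l m = if j = l then e i m else 0)
    (he_star : ∀ i j, star (e i j) = e j i)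
    (he_sum : ∑ i, e i i = 1)
    (q₁ : A) (hq_sa : star q₁ = q₁) (hq_idem : q₁ * q₁ = q₁)
    (T : Finset (Fin k))
    (hcard : {i : Fin k | e i i * q₁ ≠ 0 ∨ q₁ * e i i ≠ 0}.ncard ≤ T.card) :
    ∃ u ∈ unitary A,
      u ∈ Submodule.span ℂ {a : A | ∃ i j, a = e i j} ∧
      ∀ j ∉ T, e j j * (u * q₁ * star u) = 0 ∧ (u * q₁ * star u) * e j j = 0 := by
  classical
  set S : Finset (Fin k) := Finset.univ.filter (fun i => e i i * q₁ ≠ 0 ∨ q₁ * e i i ≠ 0) with hS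
  have hST : S.card ≤ T.card := by
    have h : {i : Fin k | e i i * q₁ ≠ 0 ∨ q₁ * e i i ≠ 0} = (S : Set (Fin k)) := by
      ext i; simp [hS]
    rwa [h, Set.ncard_coe_finset] at hcard
  obtain ⟨T', hT', hc⟩ := Finset.exists_subset_card_eq hST
  let f : {x // x ∈ S} ≃ {x // x ∈ T'} := Finset.equivOfCardEq hc.symm
  let σ : Equiv.Perm (Fin k) := f.extendSubtype
  have hσ : ∀ i ∈ S, σ i ∈ T := fun i hi => hT' (f.extendSubtype_mem i hi)
  have hstar : star (∑ i, e (σ i) i) = ∑ i, e i (σ i) := by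
    rw [star_sum]; simp only [he_star]
  have hleft : ∀ i, e (σ i) (σ i) * (∑ i, e (σ i) i) = e (σ i) i := by
    intro i
    simp [Finset.mul_sum, he_mul]
  have hright : ∀ i, (∑ i, e i (σ i)) * e (σ i) (σ i) = e i (σ i) := by
    intro i
    simp [Finset.sum_mul, he_mul]
  refine ⟨∑ i, e (σ i) i, ?_, ?_, ?_⟩
  · rw [Unitary.mem_iff, hstar]
    constructor
    · simp only [Finset.sum_mul, Finset.mul_sum, he_mul]
      simpa using he_sum
    · simp only [Finset.sum_mul, Finset.mul_sum, he_mul]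
      simp only [Finset.sum_ite_eq, Finset.sum_ite_eq', Finset.mem_univ, if_true]
      rw [← he_sum]
      exact Equiv.sum_comp σ (fun i => e i i)
  · exact Submodule.sum_mem _ fun i _ => Submodule.subset_span ⟨_, _, rfl⟩
  · intro j hj
    obtain ⟨i, rfl⟩ := σ.surjective j
    have hi : i ∉ S := fun h => hj (hσ i h)
    have h2 : e i i * q₁ = 0 ∧ q₁ * e i i = 0 := by
      simpa [hS, not_or] using hi
    have h3 : e (σ i) i = e (σ i) i * e i i := by simp [he_mul]
    have h4 : e i (σ i) = e i i * e i (σ i) := by simp [he_mul]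
    rw [hstar]
    constructor
    · rw [← mul_assoc, ← mul_assoc, hleft, h3, mul_assoc (e (σ i) i), h2.1, mul_zero, zero_mul]
    · rw [mul_assoc, hright, h4, mul_assoc, ← mul_assoc q₁, h2.2, zero_mul, mul_zero]
end

section
/- Let A be a unital C*-algebra carrying a system of 3×3 matrix units {e_{ij}}_{1≤i,j≤3}. Let z₁, z₂ ∈ A be selfadjoint and let y ∈ A, and assume z₁, z₂, y each commute with every e_{ij}. Define a = e₁₁ + 2e₂₂ + 3e₃₃ and b = z₁e₁₁ + y e₁₂ + e₁₃ + y* e₂₁ + z₂ e₂₂ + e₂₃ + e₃₁ + e₃₂ + e₃₃. Then y, z₁, z₂, and every e_{ij} (1 ≤ i, j ≤ 3) belong to C*(a + i b). -/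
/-- The algebraic core: any star subalgebra containing `a + i b` contains everything. -/
theorem three_by_three_aux
    {A : Type*} [NormedRing A] [StarRing A] [NormedAlgebra ℂ A] [StarModule ℂ A]
    (e : Fin 3 → Fin 3 → A)
    (he_mul : ∀ i j l m, e i j * e l m = if j = l then e i m else 0)
    (he_star : ∀ i j, star (e i j) = e j i)
    (he_sum : ∑ i, e i i = 1)
    (z₁ z₂ y : A) (hz₁ : star z₁ = z₁) (hz₂ : star z₂ = z₂)
    (hz₁c : ∀ i j, z₁ * e i j = e i j * z₁)
    (hz₂c : ∀ i j, z₂ * e i j = e i j * z₂)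
    (hyc : ∀ i j, y * e i j = e i j * y) (S : StarSubalgebra ℂ A)
    (hx : (e 0 0 + 2 * e 1 1 + 3 * e 2 2) + Complex.I •
          (z₁ * e 0 0 + y * e 0 1 + e 0 2 + star y * e 1 0 + z₂ * e 1 1 + e 1 2 +
            e 2 0 + e 2 1 + e 2 2) ∈ S) :
    y ∈ S ∧ z₁ ∈ S ∧ z₂ ∈ S ∧ ∀ i j, e i j ∈ S := by
  have hsyc : ∀ i j, star y * e i j = e i j * star y := by
    intro i j
    have h := congrArg star (hyc j i)
    simpa [he_star] using h.symm
  have assoc : ∀ w : A, (∀ i j, w * e i j = e i j * w) →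
      ∀ i j v, e i j * (w * v) = w * (e i j * v) := by
    intro w hw i j v
    rw [← mul_assoc, ← hw, mul_assoc]
  have az₁ := assoc z₁ hz₁c
  have az₂ := assoc z₂ hz₂c
  have ay := assoc y hyc
  have asy := assoc (star y) hsyc
  have h1 : (1 : A) = e 0 0 + e 1 1 + e 2 2 := by
    rw [← he_sum, Fin.sum_univ_three]
  have t2 : (2 : A) * e 1 1 = (2 : ℂ) • e 1 1 := by rw [two_mul, two_smul]
  have t3 : (3 : A) * e 2 2 = (3 : ℂ) • e 2 2 := by
    rw [Algebra.smul_def, map_ofNat]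
  rw [t2, t3] at hx
  obtain ⟨a, ha⟩ : ∃ a, a = e 0 0 + (2 : ℂ) • e 1 1 + (3 : ℂ) • e 2 2 := ⟨_, rfl⟩
  obtain ⟨b, hb⟩ : ∃ b, b = z₁ * e 0 0 + y * e 0 1 + e 0 2 + star y * e 1 0 + z₂ * e 1 1 + e 1 2 +
            e 2 0 + e 2 1 + e 2 2 := ⟨_, rfl⟩
  rw [← ha, ← hb] at hx
  have hsa : star a = a := by
    rw [ha]
    simp [he_star, star_smul]
  have hsb : star b = b := by
    rw [hb]
    simp only [star_add, star_mul, he_star, star_star, hz₁, hz₂, ← hz₁c, ← hz₂c, ← hyc, ← hsyc]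
    abel
  have hx' : a - Complex.I • b ∈ S := by
    have h := star_mem hx
    rw [star_add, star_smul, hsa, hsb] at h
    simpa [sub_eq_add_neg] using h
  have haS : a ∈ S := by
    have h := S.smul_mem (add_mem hx hx') (1/2 : ℂ)
    convert h using 1
    module
  have hbS : b ∈ S := by
    have h := S.smul_mem (sub_mem hx hx') (-Complex.I/2 : ℂ)
    convert h using 1
    have : ((-Complex.I/2) * (2 * Complex.I) : ℂ) = 1 := by
      linear_combination -Complex.I_mul_I
    calc b = (1 : ℂ) • b := (one_smul _ _).symm
      _ = ((-Complex.I/2) * (2 * Complex.I) : ℂ) • b := by rw [this]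
      _ = _ := by module
  have haa : a * a = e 0 0 + (4 : ℂ) • e 1 1 + (9 : ℂ) • e 2 2 := by
    rw [ha]
    simp [mul_add, add_mul, he_mul, smul_smul]
    norm_num
  have haaS : a * a ∈ S := mul_mem haS haS
  have h1S : (1 : A) ∈ S := one_mem S
  have lin : ∀ p q r : ℂ, p • (1 : A) + q • a + r • (a * a) ∈ S := fun p q r =>
    add_mem (add_mem (S.smul_mem h1S p) (S.smul_mem haS q)) (S.smul_mem haaS r)
  have e00 : e 0 0 ∈ S := by
    convert lin 3 (-5/2) (1/2) using 1
    rw [haa, ha, h1]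
    module
  have e11 : e 1 1 ∈ S := by
    convert lin (-3) 4 (-1) using 1
    rw [haa, ha, h1]
    module
  have e22 : e 2 2 ∈ S := by
    convert lin 1 (-3/2) (1/2) using 1
    rw [haa, ha, h1]
    module
  have comp : ∀ i j, e i i ∈ S → e j j ∈ S → e i i * b * e j j ∈ S := fun i j hi hj =>
    mul_mem (mul_mem hi hbS) hj
  have e02 : e 0 2 ∈ S := by
    have h := comp 0 2 e00 e22
    rw [hb] at h
    simpa [mul_add, add_mul, mul_assoc, he_mul, az₁, az₂, ay, asy] using h
  have e12 : e 1 2 ∈ S := by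
    have h := comp 1 2 e11 e22
    rw [hb] at h
    simpa [mul_add, add_mul, mul_assoc, he_mul, az₁, az₂, ay, asy] using h
  have hy : y * e 0 1 ∈ S := by
    have h := comp 0 1 e00 e11
    rw [hb] at h
    simpa [mul_add, add_mul, mul_assoc, he_mul, az₁, az₂, ay, asy] using h
  have hz1 : z₁ * e 0 0 ∈ S := by
    have h := comp 0 0 e00 e00
    rw [hb] at h
    simpa [mul_add, add_mul, mul_assoc, he_mul, az₁, az₂, ay, asy] using h
  have hz2 : z₂ * e 1 1 ∈ S := by
    have h := comp 1 1 e11 e11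
    rw [hb] at h
    simpa [mul_add, add_mul, mul_assoc, he_mul, az₁, az₂, ay, asy] using h
  have ei2 : ∀ i, e i 2 ∈ S := by
    intro i
    fin_cases i
    · exact e02
    · exact e12
    · exact e22
  have eS : ∀ i j, e i j ∈ S := by
    intro i j
    have h := mul_mem (ei2 i) (star_mem (ei2 j))
    simpa [he_star, he_mul] using h
  have spread : ∀ (w : A) (k l : Fin 3), (∀ i j, w * e i j = e i j * w) → w * e k l ∈ S → w ∈ S := by
    intro w k l hw hS
    have h : ∑ i, e i k * (w * e k l) * e l i ∈ S :=
      sum_mem fun i _ => mul_mem (mul_mem (eS i k) hS) (eS l i)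
    have h2 : ∀ i, e i k * (w * e k l) * e l i = w * e i i := by
      intro i
      rw [assoc w hw, mul_assoc, he_mul, if_pos rfl, he_mul, if_pos rfl]
    simpa only [h2, ← Finset.mul_sum, he_sum, mul_one] using h
  exact ⟨spread y 0 1 hyc hy, spread z₁ 0 0 hz₁c hz1, spread z₂ 1 1 hz₂c hz2, eS⟩

/-- With 3×3 matrix units `e i j` and elements `z₁, z₂` selfadjoint and
`y`, all commuting with the matrix units, the elements `y, z₁, z₂` and all `e i j`
belong to the C*-algebra generated by `a + i b`, where
`a = e₁₁ + 2e₂₂ + 3e₃₃` and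
`b = z₁e₁₁ + y e₁₂ + e₁₃ + y* e₂₁ + z₂ e₂₂ + e₂₃ + e₃₁ + e₃₂ + e₃₃`. -/
theorem mem_cstar_of_three_by_three_trick
    {A : Type*} [NormedRing A] [StarRing A] [CStarRing A] [CompleteSpace A]
    [NormedAlgebra ℂ A] [StarModule ℂ A]
    (e : Fin 3 → Fin 3 → A)
    (he_mul : ∀ i j l m, e i j * e l m = if j = l then e i m else 0)
    (he_star : ∀ i j, star (e i j) = e j i)
    (he_sum : ∑ i, e i i = 1)
    (z₁ z₂ y : A) (hz₁ : star z₁ = z₁) (hz₂ : star z₂ = z₂)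
    (hz₁c : ∀ i j, z₁ * e i j = e i j * z₁)
    (hz₂c : ∀ i j, z₂ * e i j = e i j * z₂)
    (hyc : ∀ i j, y * e i j = e i j * y) :
    y ∈ (StarAlgebra.adjoin ℂ
        {(e 0 0 + 2 * e 1 1 + 3 * e 2 2) + Complex.I •
          (z₁ * e 0 0 + y * e 0 1 + e 0 2 + star y * e 1 0 + z₂ * e 1 1 + e 1 2 +
            e 2 0 + e 2 1 + e 2 2)}).topologicalClosure ∧
    z₁ ∈ (StarAlgebra.adjoin ℂ
        {(e 0 0 + 2 * e 1 1 + 3 * e 2 2) + Complex.I •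
          (z₁ * e 0 0 + y * e 0 1 + e 0 2 + star y * e 1 0 + z₂ * e 1 1 + e 1 2 +
            e 2 0 + e 2 1 + e 2 2)}).topologicalClosure ∧
    z₂ ∈ (StarAlgebra.adjoin ℂ
        {(e 0 0 + 2 * e 1 1 + 3 * e 2 2) + Complex.I •
          (z₁ * e 0 0 + y * e 0 1 + e 0 2 + star y * e 1 0 + z₂ * e 1 1 + e 1 2 +
            e 2 0 + e 2 1 + e 2 2)}).topologicalClosure ∧
    ∀ i j, e i j ∈ (StarAlgebra.adjoin ℂ
        {(e 0 0 + 2 * e 1 1 + 3 * e 2 2) + Complex.I •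
          (z₁ * e 0 0 + y * e 0 1 + e 0 2 + star y * e 1 0 + z₂ * e 1 1 + e 1 2 +
            e 2 0 + e 2 1 + e 2 2)}).topologicalClosure := by
  exact three_by_three_aux e he_mul he_star he_sum z₁ z₂ y hz₁ hz₂ hz₁c hz₂c hyc _
    (StarSubalgebra.le_topologicalClosure _ (StarAlgebra.self_mem_adjoin_singleton ℂ _))
end

section
/- Let A be a unital C*-algebra with a tracial state τ, and let {q_k}_{k=1}^∞ be a sequence of projections in A with Re τ(q_k) > 0 for all k. Then the set 𝒜({q_k}) := { x ∈ A : lim_{k→∞} ‖[x, q_k]‖₂ / ‖q_k‖₂ = 0 } is a norm-closed unital *-subalgebra of A: it contains 1, it is closed under addition, complex scalar multiplication, multiplication, and the adjoint operation, and it is closed in the C*-norm topology of A. -/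
open Filter Topology

/-- The trace 2-norm `‖x‖₂ = √(Re τ(x*x))` associated with a tracial state `τ`. -/
noncomputable def traceNorm2 {A : Type*} [NormedRing A] [StarRing A] [NormedAlgebra ℂ A]
    (τ : A →ₗ[ℂ] ℂ) (x : A) : ℝ :=
  Real.sqrt (τ (star x * x)).re

theorem exists_star_mul_self_gap {A : Type*} [CStarAlgebra A] (a : A) :
    ∃ b : A, star b * b = algebraMap ℂ A ((‖a‖ ^ 2 : ℝ) : ℂ) - star a * a := by
  let := CStarAlgebra.spectralOrder A
  have := CStarAlgebra.spectralOrderedRing A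
  have h : star a * a ≤ algebraMap ℝ A (‖a‖ ^ 2) :=
    CStarAlgebra.star_mul_le_algebraMap_norm_sq
  obtain ⟨b, hb⟩ := CStarAlgebra.nonneg_iff_eq_star_mul_self.mp (sub_nonneg.mpr h)
  refine ⟨b, hb.symm.trans ?_⟩
  congr 1

section aux
variable {A : Type*} [NormedRing A] [StarRing A] [NormedAlgebra ℂ A]

theorem traceNorm2_nonneg (τ : A →ₗ[ℂ] ℂ) (x : A) : 0 ≤ traceNorm2 τ x := Real.sqrt_nonneg _

theorem traceNorm2_smul [StarModule ℂ A] (τ : A →ₗ[ℂ] ℂ) (c : ℂ) (x : A) :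
    traceNorm2 τ (c • x) = ‖c‖ * traceNorm2 τ x := by
  unfold traceNorm2
  have h : (τ (star (c • x) * (c • x))).re = ‖c‖ ^ 2 * (τ (star x * x)).re := by
    rw [star_smul, smul_mul_smul_comm, map_smul, smul_eq_mul]
    have : star c * c = ((‖c‖ ^ 2 : ℝ) : ℂ) := by
      have := Complex.conj_mul' c
      push_cast
      exact this
    rw [this, Complex.re_ofReal_mul]
  rw [h, Real.sqrt_mul (by positivity), Real.sqrt_sq (norm_nonneg c)]

theorem traceNorm2_star (τ : A →ₗ[ℂ] ℂ) (hτtr : ∀ x y : A, τ (x * y) = τ (y * x)) (x : A) :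
    traceNorm2 τ (star x) = traceNorm2 τ x := by
  unfold traceNorm2
  rw [star_star, hτtr]

theorem traceNorm2_add [StarModule ℂ A] (τ : A →ₗ[ℂ] ℂ)
    (hτpos : ∀ x : A, 0 ≤ (τ (star x * x)).re) (x y : A) :
    traceNorm2 τ (x + y) ≤ traceNorm2 τ x + traceNorm2 τ y := by
  have key : ∀ t : ℝ, (τ (star (x + (t : ℂ) • y) * (x + (t : ℂ) • y))).re =
      (τ (star y * y)).re * (t * t) + ((τ (star x * y)).re + (τ (star y * x)).re) * t
        + (τ (star x * x)).re := by
    intro t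
    simp only [star_add, star_smul, add_mul, mul_add, smul_mul_assoc, mul_smul_comm, map_add,
      map_smul, smul_eq_mul, Complex.add_re, Complex.star_def, Complex.conj_ofReal,
      Complex.re_ofReal_mul]
    ring
  have hd := discrim_le_zero (fun t => by rw [← key t]; exact hτpos _)
  have h1 := key 1
  simp only [Complex.ofReal_one, one_smul, mul_one] at h1
  unfold discrim at hd
  unfold traceNorm2
  rw [h1]
  have hx := hτpos x
  have hy := hτpos y
  set a := (τ (star x * x)).re
  set c := (τ (star y * y)).re
  set b := (τ (star x * y)).re + (τ (star y * x)).re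
  have hb : b ≤ 2 * (√a * √c) := by
    apply le_of_sq_le_sq _ (by positivity)
    rw [mul_pow, mul_pow, Real.sq_sqrt hx, Real.sq_sqrt hy]
    linarith
  apply Real.sqrt_le_iff.mpr ⟨by positivity, ?_⟩
  rw [add_sq, Real.sq_sqrt hx, Real.sq_sqrt hy]
  linarith

theorem traceNorm2_mul_left [CStarRing A] [CompleteSpace A] [StarModule ℂ A] (τ : A →ₗ[ℂ] ℂ)
    (hτpos : ∀ x : A, 0 ≤ (τ (star x * x)).re) (a x : A) :
    traceNorm2 τ (a * x) ≤ ‖a‖ * traceNorm2 τ x := by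
  let : CStarAlgebra A := {}
  obtain ⟨b, hb⟩ := exists_star_mul_self_gap a
  have h := hτpos (b * x)
  have e : star (b * x) * (b * x) =
      ((‖a‖ ^ 2 : ℝ) : ℂ) • (star x * x) - star (a * x) * (a * x) := by
    rw [star_mul, mul_assoc, ← mul_assoc (star b), hb, Algebra.algebraMap_eq_smul_one, star_mul]
    simp only [sub_mul, mul_sub, smul_mul_assoc, one_mul, mul_smul_comm, mul_assoc]
  rw [e, map_sub, map_smul, smul_eq_mul, Complex.sub_re, Complex.re_ofReal_mul] at h
  unfold traceNorm2
  rw [← Real.sqrt_sq (norm_nonneg a), ← Real.sqrt_mul (by positivity)]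
  exact Real.sqrt_le_sqrt (by linarith)

theorem traceNorm2_mul_right [CStarRing A] [CompleteSpace A] [StarModule ℂ A] (τ : A →ₗ[ℂ] ℂ)
    (hτpos : ∀ x : A, 0 ≤ (τ (star x * x)).re)
    (hτtr : ∀ x y : A, τ (x * y) = τ (y * x)) (a x : A) :
    traceNorm2 τ (x * a) ≤ ‖a‖ * traceNorm2 τ x := by
  rw [← traceNorm2_star τ hτtr, star_mul, ← traceNorm2_star τ hτtr x, ← norm_star a]
  exact traceNorm2_mul_left τ hτpos _ _

theorem traceNorm2_neg (τ : A →ₗ[ℂ] ℂ) (x : A) : traceNorm2 τ (-x) = traceNorm2 τ x := by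
  simp [traceNorm2]

end aux

/-- Given a sequence of projections `q k` with positive trace, the set
`𝒜({q_k}) = { x : ‖[x,q_k]‖₂/‖q_k‖₂ → 0 }` is a norm-closed unital *-subalgebra. -/
theorem asymptotic_commutant_is_closed_star_subalgebra
    {A : Type*} [NormedRing A] [StarRing A] [CStarRing A] [CompleteSpace A]
    [NormedAlgebra ℂ A] [StarModule ℂ A]
    (τ : A →ₗ[ℂ] ℂ)
    (hτ1 : τ 1 = 1)
    (hτpos : ∀ x : A, 0 ≤ (τ (star x * x)).re)
    (hτreal : ∀ x : A, (τ (star x * x)).im = 0)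
    (hτtr : ∀ x y : A, τ (x * y) = τ (y * x))
    (q : ℕ → A)
    (hq_sa : ∀ k, star (q k) = q k)
    (hq_idem : ∀ k, q k * q k = q k)
    (hq_pos : ∀ k, 0 < (τ (q k)).re) :
    (1 : A) ∈ {x : A | Tendsto
        (fun k => traceNorm2 τ (x * q k - q k * x) / traceNorm2 τ (q k)) atTop (𝓝 0)} ∧
    (∀ x ∈ {x : A | Tendsto
        (fun k => traceNorm2 τ (x * q k - q k * x) / traceNorm2 τ (q k)) atTop (𝓝 0)},
      ∀ y ∈ {x : A | Tendsto
        (fun k => traceNorm2 τ (x * q k - q k * x) / traceNorm2 τ (q k)) atTop (𝓝 0)},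
        x + y ∈ {x : A | Tendsto
        (fun k => traceNorm2 τ (x * q k - q k * x) / traceNorm2 τ (q k)) atTop (𝓝 0)}) ∧
    (∀ (c : ℂ), ∀ x ∈ {x : A | Tendsto
        (fun k => traceNorm2 τ (x * q k - q k * x) / traceNorm2 τ (q k)) atTop (𝓝 0)},
        c • x ∈ {x : A | Tendsto
        (fun k => traceNorm2 τ (x * q k - q k * x) / traceNorm2 τ (q k)) atTop (𝓝 0)}) ∧
    (∀ x ∈ {x : A | Tendsto
        (fun k => traceNorm2 τ (x * q k - q k * x) / traceNorm2 τ (q k)) atTop (𝓝 0)},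
      ∀ y ∈ {x : A | Tendsto
        (fun k => traceNorm2 τ (x * q k - q k * x) / traceNorm2 τ (q k)) atTop (𝓝 0)},
        x * y ∈ {x : A | Tendsto
        (fun k => traceNorm2 τ (x * q k - q k * x) / traceNorm2 τ (q k)) atTop (𝓝 0)}) ∧
    (∀ x ∈ {x : A | Tendsto
        (fun k => traceNorm2 τ (x * q k - q k * x) / traceNorm2 τ (q k)) atTop (𝓝 0)},
        star x ∈ {x : A | Tendsto
        (fun k => traceNorm2 τ (x * q k - q k * x) / traceNorm2 τ (q k)) atTop (𝓝 0)}) ∧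
    IsClosed {x : A | Tendsto
        (fun k => traceNorm2 τ (x * q k - q k * x) / traceNorm2 τ (q k)) atTop (𝓝 0)} := by
  have hN : ∀ k, 0 < traceNorm2 τ (q k) := by
    intro k
    unfold traceNorm2
    rw [hq_sa, hq_idem]
    exact Real.sqrt_pos.mpr (hq_pos k)
  have hnn : ∀ x k, 0 ≤ traceNorm2 τ (x * q k - q k * x) / traceNorm2 τ (q k) :=
    fun x k => div_nonneg (traceNorm2_nonneg _ _) (hN k).le
  have triangle := traceNorm2_add τ hτpos
  have mulL := traceNorm2_mul_left τ hτpos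
  have mulR := traceNorm2_mul_right τ hτpos hτtr
  simp only [Set.mem_ofPred_eq]
  refine ⟨?_, ?_, ?_, ?_, ?_, ?_⟩
  · simp [traceNorm2]
  · intro x hx y hy
    have h := hx.add hy
    rw [add_zero] at h
    refine squeeze_zero (hnn _) (fun k => ?_) h
    rw [← add_div]
    refine div_le_div_of_nonneg_right ?_ (hN k).le
    have e : (x + y) * q k - q k * (x + y) = (x * q k - q k * x) + (y * q k - q k * y) := by
      noncomm_ring
    rw [e]
    exact triangle _ _
  · intro c x hx
    have h := hx.const_mul ‖c‖
    rw [mul_zero] at h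
    refine h.congr (fun k => ?_)
    rw [smul_mul_assoc, mul_smul_comm, ← smul_sub, traceNorm2_smul, mul_div_assoc]
  · intro x hx y hy
    have h := (hy.const_mul ‖x‖).add (hx.const_mul ‖y‖)
    rw [mul_zero, mul_zero, add_zero] at h
    refine squeeze_zero (hnn _) (fun k => ?_) h
    rw [← mul_div_assoc, ← mul_div_assoc, ← add_div]
    refine div_le_div_of_nonneg_right ?_ (hN k).le
    have e : (x * y) * q k - q k * (x * y) =
        x * (y * q k - q k * y) + (x * q k - q k * x) * y := by
      noncomm_ring
    rw [e]
    exact (triangle _ _).trans (add_le_add (mulL _ _) (mulR _ _))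
  · intro x hx
    refine hx.congr (fun k => ?_)
    have e : star x * q k - q k * star x = -star (x * q k - q k * x) := by
      rw [star_sub, star_mul, star_mul, hq_sa]
      noncomm_ring
    rw [e, traceNorm2_neg, traceNorm2_star τ hτtr]
  · rw [← closure_subset_iff_isClosed]
    intro x hx
    rw [Metric.mem_closure_iff] at hx
    rw [Set.mem_ofPred_eq, Metric.tendsto_atTop]
    intro ε hε
    obtain ⟨y, hy, hxy⟩ := hx (ε / 4) (by positivity)
    rw [Set.mem_ofPred_eq, Metric.tendsto_atTop] at hy
    obtain ⟨K, hK⟩ := hy (ε / 2) (by positivity)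
    refine ⟨K, fun k hk => ?_⟩
    have h1 := hK k hk
    rw [Real.dist_eq, sub_zero, abs_of_nonneg (hnn _ _), div_lt_iff₀ (hN k)] at h1 ⊢
    rw [dist_eq_norm] at hxy
    have e : x * q k - q k * x =
        (y * q k - q k * y) + ((x - y) * q k + -(q k * (x - y))) := by
      noncomm_ring
    have h2 := triangle (y * q k - q k * y) ((x - y) * q k + -(q k * (x - y)))
    have h3 := triangle ((x - y) * q k) (-(q k * (x - y)))
    rw [traceNorm2_neg] at h3
    rw [← e] at h2
    have h4 := mulL (x - y) (q k)
    have h5 := mulR (x - y) (q k)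
    have h6 := mul_lt_mul_of_pos_right hxy (hN k)
    linarith
end

section
/- Let A be a unital C*-algebra with a tracial state τ, and let {q_k}_{k=1}^∞ be a sequence of projections in A with Re τ(q_k) > 0 for all k. Let p be a projection in A with lim_{k→∞} ‖[p, q_k]‖₂ / ‖q_k‖₂ = 0, and let x ∈ A with lim_{k→∞} ‖[x, q_k]‖₂ / ‖q_k‖₂ = 0. Then lim_{k→∞} ‖[p x p, p q_k p]‖₂ / ‖q_k‖₂ = 0. -/
open Filter Topology

theorem exists_sq_compl {A : Type*} [NormedRing A] [StarRing A] [CStarRing A] [CompleteSpace A]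
    [NormedAlgebra ℂ A] [StarModule ℂ A] (a : A) :
    ∃ b : A, star b * b = ((‖a‖ ^ 2 : ℝ) : ℂ) • (1 : A) - star a * a := by
  letI : CStarAlgebra A := {}
  letI : PartialOrder A := CStarAlgebra.spectralOrder A
  haveI : StarOrderedRing A := CStarAlgebra.spectralOrderedRing A
  have h := CStarAlgebra.star_mul_le_algebraMap_norm_sq (a := a)
  rw [← sub_nonneg, CStarAlgebra.nonneg_iff_eq_star_mul_self] at h
  obtain ⟨b, hb⟩ := h
  refine ⟨b, ?_⟩
  rw [← hb, Algebra.algebraMap_eq_smul_one]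
  congr 1

section
variable {A : Type*} [NormedRing A] [StarRing A] [CStarRing A] [CompleteSpace A]
    [NormedAlgebra ℂ A] [StarModule ℂ A]
    (τ : A →ₗ[ℂ] ℂ)

theorem sq_mul_left_le (hτpos : ∀ x : A, 0 ≤ (τ (star x * x)).re) (a y : A) :
    (τ (star (a * y) * (a * y))).re ≤ ‖a‖ ^ 2 * (τ (star y * y)).re := by
  obtain ⟨b, hb⟩ := exists_sq_compl a
  have h := hτpos (b * y)
  have e : star (b * y) * (b * y) =
      ((‖a‖ ^ 2 : ℝ) : ℂ) • (star y * y) - star (a * y) * (a * y) := by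
    have : star (b * y) * (b * y) = star y * (star b * b) * y := by
      simp only [star_mul, mul_assoc]
    rw [this, hb]
    simp only [mul_sub, sub_mul, mul_smul_comm, smul_mul_assoc, mul_one, star_mul, mul_assoc]
  rw [e, map_sub, map_smul, smul_eq_mul, Complex.sub_re, Complex.re_ofReal_mul] at h
  linarith

theorem sq_mul_right_le (hτpos : ∀ x : A, 0 ≤ (τ (star x * x)).re)
    (hτtr : ∀ x y : A, τ (x * y) = τ (y * x)) (a y : A) :
    (τ (star (y * a) * (y * a))).re ≤ ‖a‖ ^ 2 * (τ (star y * y)).re := by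
  have h := sq_mul_left_le τ hτpos (star a) (star y)
  rw [norm_star, star_star, hτtr y, ← star_mul, star_star, hτtr] at h
  exact h

theorem sq_add_le (hτpos : ∀ x : A, 0 ≤ (τ (star x * x)).re) (a b : A) :
    (τ (star (a + b) * (a + b))).re ≤
      2 * (τ (star a * a)).re + 2 * (τ (star b * b)).re := by
  have h := hτpos (a - b)
  simp only [star_add, star_sub, add_mul, mul_add, sub_mul, mul_sub, map_add, map_sub,
    Complex.add_re, Complex.sub_re] at h ⊢
  linarith

theorem sq_corner_le (hτpos : ∀ x : A, 0 ≤ (τ (star x * x)).re)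
    (hτtr : ∀ x y : A, τ (x * y) = τ (y * x)) (c d y : A) :
    (τ (star (c * y * d) * (c * y * d))).re ≤ (‖c‖ ^ 2 * ‖d‖ ^ 2) * (τ (star y * y)).re := by
  have h1 := sq_mul_right_le τ hτpos hτtr d (c * y)
  have h2 := sq_mul_left_le τ hτpos c y
  have h3 := mul_le_mul_of_nonneg_left h2 (sq_nonneg ‖d‖)
  linarith

theorem traceNorm2_main (hτpos : ∀ x : A, 0 ≤ (τ (star x * x)).re)
    (hτtr : ∀ x y : A, τ (x * y) = τ (y * x)) (p x : A) (hp_idem : p * p = p) :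
    ∃ C : ℝ, ∀ q : A,
      traceNorm2 τ ((p * x * p) * (p * q * p) - (p * q * p) * (p * x * p)) ≤
        C * (traceNorm2 τ (p * q - q * p) + traceNorm2 τ (x * q - q * x)) := by
  set K : ℝ := 4 * (‖p * x‖ ^ 2 * ‖p‖ ^ 2) + 4 * (‖p‖ ^ 2 * ‖x * p‖ ^ 2)
    + 2 * (‖p‖ ^ 2 * ‖p‖ ^ 2) with hK
  have hK0 : 0 ≤ K := by positivity
  refine ⟨Real.sqrt K, fun q => ?_⟩
  have e : (p * x * p) * (p * q * p) - (p * q * p) * (p * x * p) =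
      ((p * x) * (p * q - q * p) * p + p * (p * q - q * p) * (x * p))
        + p * (x * q - q * x) * p := by
    have hp' : ∀ z : A, p * (p * z) = p * z := fun z => by rw [← mul_assoc, hp_idem]
    simp only [mul_sub, sub_mul, mul_assoc, hp', hp_idem]
    abel
  have h0 := sq_add_le τ hτpos
    ((p * x) * (p * q - q * p) * p + p * (p * q - q * p) * (x * p)) (p * (x * q - q * x) * p)
  have h1 := sq_add_le τ hτpos
    ((p * x) * (p * q - q * p) * p) (p * (p * q - q * p) * (x * p))
  have h2 := sq_corner_le τ hτpos hτtr (p * x) p (p * q - q * p)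
  have h3 := sq_corner_le τ hτpos hτtr p (x * p) (p * q - q * p)
  have h4 := sq_corner_le τ hτpos hτtr p p (x * q - q * x)
  rw [← e] at h0
  have hu := hτpos (p * q - q * p)
  have hv := hτpos (x * q - q * x)
  unfold traceNorm2
  set u := (τ (star (p * q - q * p) * (p * q - q * p))).re
  set v := (τ (star (x * q - q * x) * (x * q - q * x))).re
  have hfin : ∀ w : ℝ, w ≤ K * (u + v) → √w ≤ √K * (√u + √v) := by
    intro w hw
    apply Real.sqrt_le_iff.mpr
    refine ⟨by positivity, hw.trans ?_⟩
    rw [mul_pow, Real.sq_sqrt hK0]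
    apply mul_le_mul_of_nonneg_left _ hK0
    nlinarith [Real.sq_sqrt hu, Real.sq_sqrt hv, Real.sqrt_nonneg u, Real.sqrt_nonneg v,
      mul_nonneg (Real.sqrt_nonneg u) (Real.sqrt_nonneg v)]
  apply hfin
  have a1 : 0 ≤ (‖p * x‖ ^ 2 * ‖p‖ ^ 2) * v := by positivity
  have a2 : 0 ≤ (‖p‖ ^ 2 * ‖x * p‖ ^ 2) * v := by positivity
  have a3 : 0 ≤ (‖p‖ ^ 2 * ‖p‖ ^ 2) * u := by positivity
  rw [hK]
  linarith

end

/-- If a projection `p` and an element `x` both asymptotically commute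
with projections `q k` (relative to `‖q_k‖₂`), then
`‖[p x p, p q_k p]‖₂ / ‖q_k‖₂ → 0`. -/
theorem corner_asymptotic_commutation
    {A : Type*} [NormedRing A] [StarRing A] [CStarRing A] [CompleteSpace A]
    [NormedAlgebra ℂ A] [StarModule ℂ A]
    (τ : A →ₗ[ℂ] ℂ)
    (hτ1 : τ 1 = 1)
    (hτpos : ∀ x : A, 0 ≤ (τ (star x * x)).re)
    (hτreal : ∀ x : A, (τ (star x * x)).im = 0)
    (hτtr : ∀ x y : A, τ (x * y) = τ (y * x))
    (q : ℕ → A)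
    (hq_sa : ∀ k, star (q k) = q k)
    (hq_idem : ∀ k, q k * q k = q k)
    (hq_pos : ∀ k, 0 < (τ (q k)).re)
    (p : A) (hp_sa : star p = p) (hp_idem : p * p = p)
    (hp_lim : Tendsto (fun k => traceNorm2 τ (p * q k - q k * p) / traceNorm2 τ (q k))
      atTop (𝓝 0))
    (x : A)
    (hx_lim : Tendsto (fun k => traceNorm2 τ (x * q k - q k * x) / traceNorm2 τ (q k))
      atTop (𝓝 0)) :
    Tendsto (fun k =>
        traceNorm2 τ ((p * x * p) * (p * q k * p) - (p * q k * p) * (p * x * p)) /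
          traceNorm2 τ (q k)) atTop (𝓝 0) := by
  obtain ⟨C, hC⟩ := traceNorm2_main τ hτpos hτtr p x hp_idem
  have hlim := (hp_lim.add hx_lim).const_mul C
  rw [add_zero, mul_zero] at hlim
  refine squeeze_zero (fun k => div_nonneg (Real.sqrt_nonneg _) (Real.sqrt_nonneg _))
    (fun k => ?_) hlim
  rw [← add_div, ← mul_div_assoc]
  exact div_le_div_of_nonneg_right (hC (q k)) (Real.sqrt_nonneg _)
end

section
/- Let μ be a Borel probability measure on ℝ with μ([0,1]) = 1. Then ∫ (t − 1_{(1/2,1]}(t))² dμ(t) ≤ 4 ∫ (t − t²)² dμ(t), where 1_{(1/2,1]} denotes the indicator function of the interval (1/2, 1]. -/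
open MeasureTheory

/-- For a Borel probability measure `μ` on `ℝ` supported in `[0,1]`,
`∫ (t − 1_{(1/2,1]}(t))² dμ ≤ 4 ∫ (t − t²)² dμ`. -/
theorem integral_sq_dist_indicator_le
    (μ : Measure ℝ) [IsProbabilityMeasure μ] (hμ : μ (Set.Icc 0 1) = 1) :
    ∫ t, (t - Set.indicator (Set.Ioc (1/2 : ℝ) 1) (fun _ => (1 : ℝ)) t) ^ 2 ∂μ ≤
      4 * ∫ t, (t - t ^ 2) ^ 2 ∂μ := by
  have hae : ∀ᵐ t ∂μ, t ∈ Set.Icc (0 : ℝ) 1 :=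
    (prob_compl_eq_zero_iff measurableSet_Icc).2 hμ
  rw [← integral_const_mul]
  refine integral_mono_of_nonneg (Filter.Eventually.of_forall fun t => sq_nonneg _) ?_ ?_
  · refine Integrable.of_bound (C := 4) (by fun_prop) ?_
    filter_upwards [hae] with t ht
    obtain ⟨h0, h1⟩ := ht
    have ha : 0 ≤ t - t ^ 2 := by nlinarith
    have hb : t - t ^ 2 ≤ 1 := by nlinarith
    rw [Real.norm_eq_abs, abs_of_nonneg (by positivity)]
    nlinarith
  · filter_upwards [hae] with t ht
    obtain ⟨h0, h1⟩ := ht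
    by_cases h : 1 / 2 < t
    · rw [Set.indicator_of_mem (show t ∈ Set.Ioc (1/2 : ℝ) 1 from ⟨h, h1⟩)]
      have h4 : 0 ≤ 4 * t ^ 2 - 1 := by nlinarith
      nlinarith [mul_nonneg h4 (sq_nonneg (t - 1))]
    · rw [Set.indicator_of_notMem (fun hm : t ∈ Set.Ioc (1/2 : ℝ) 1 => h hm.1)]
      have h4 : 0 ≤ 4 * (1 - t) ^ 2 - 1 := by nlinarith
      nlinarith [mul_nonneg h4 (sq_nonneg t)]
end

section
/- Let A be a unital C*-algebra with a tracial state τ, let m ≥ 1, and let {p_{ij}}_{1≤i,j≤m} be a system of m×m matrix units in A. Let {q_k}_{k=1}^∞ be a sequence of projections in A with Re τ(q_k) > 0 for all k, and assume lim_{k→∞} ‖[p_{ij}, q_k]‖₂ / ‖q_k‖₂ = 0 for all 1 ≤ i, j ≤ m. Let p be a projection in A with p p₁₁ = p₁₁ (i.e. p ≥ p₁₁) and lim_{k→∞} ‖[p, q_k]‖₂ / ‖q_k‖₂ = 0. Then liminf_{k→∞} ‖p q_k p‖₂² / ‖q_k‖₂² ≥ 1/m. -/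
open Filter Topology

section Helpers

variable {A : Type*} [NormedRing A] [StarRing A] [NormedAlgebra ℂ A]

theorem aux_sq (τ : A →ₗ[ℂ] ℂ) (hτpos : ∀ x : A, 0 ≤ (τ (star x * x)).re) (x : A) :
    traceNorm2 τ x ^ 2 = (τ (star x * x)).re :=
  Real.sq_sqrt (hτpos x)

/-- `‖[x,q]‖₂² = τ(x*x q) + τ(x x* q) - 2 τ(x* q x q)`. -/
theorem aux_comm (τ : A →ₗ[ℂ] ℂ) (hτtr : ∀ x y : A, τ (x * y) = τ (y * x))
    (x q : A) (hs : star q = q) (hi : q * q = q) :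
    τ (star (x * q - q * x) * (x * q - q * x)) =
      τ (star x * x * q) + τ (x * star x * q) - 2 * τ (star x * q * x * q) := by
  have e : star (x * q - q * x) * (x * q - q * x) =
      q * (star x * x * q) - q * (star x * q * x) - star x * q * x * q
        + star x * ((q * q) * x) := by
    simp only [star_sub, star_mul, hs]; noncomm_ring
  rw [e, hi, map_add, map_sub, map_sub, hτtr q, hτtr q, hτtr (star x) (q * x)]
  rw [show star x * x * q * q = star x * x * (q * q) by noncomm_ring, hi,
    show q * x * star x = q * (x * star x) by noncomm_ring, hτtr q]
  ring

/-- `τ(x* q x q) ≤ τ(x x* q)`. -/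
theorem aux_le (τ : A →ₗ[ℂ] ℂ) (hτpos : ∀ x : A, 0 ≤ (τ (star x * x)).re)
    (hτtr : ∀ x y : A, τ (x * y) = τ (y * x))
    (x q : A) (hs : star q = q) (hi : q * q = q) :
    (τ (star x * q * x * q)).re ≤ (τ (x * star x * q)).re := by
  have h := hτpos (q * x * (1 - q))
  have e : star (q * x * (1 - q)) * (q * x * (1 - q)) =
      (1 - q) * (star x * (q * q) * x * (1 - q)) := by
    simp only [star_sub, star_mul, hs, star_one]; noncomm_ring
  have e2 : star x * q * x * (1 - q) * (1 - q) =
      star x * (q * x) - star x * q * x * q - star x * q * x * q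
        + star x * q * x * (q * q) := by
    noncomm_ring
  rw [e, hi, hτtr, e2, hi, map_add, map_sub, map_sub, hτtr (star x) (q * x),
    show q * x * star x = q * (x * star x) by noncomm_ring, hτtr q] at h
  simp only [Complex.add_re, Complex.sub_re] at h
  linarith

theorem aux_nonneg (τ : A →ₗ[ℂ] ℂ) (hτpos : ∀ x : A, 0 ≤ (τ (star x * x)).re)
    (hτtr : ∀ x y : A, τ (x * y) = τ (y * x))
    (r q : A) (hrs : star r = r) (hri : r * r = r) (hs : star q = q) (hi : q * q = q) :
    0 ≤ (τ (r * q)).re := by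
  have h := hτpos (q * r)
  have e : star (q * r) * (q * r) = r * ((q * q) * r) := by
    simp only [star_mul, hs, hrs]; noncomm_ring
  rw [e, hi, hτtr, show q * r * r = q * (r * r) by noncomm_ring, hri, hτtr] at h
  exact h

end Helpers

/-- If the matrix units `pm i j` of an `m × m` system all asymptotically
commute with the projections `q k`, and `p` is a projection with `p ≥ p₁₁`
asymptotically commuting with the `q k`, then
`liminf ‖p q_k p‖₂² / ‖q_k‖₂² ≥ 1/m`. -/
theorem liminf_corner_mass_ge
    {A : Type*} [NormedRing A] [StarRing A] [CStarRing A] [CompleteSpace A]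
    [NormedAlgebra ℂ A] [StarModule ℂ A]
    (τ : A →ₗ[ℂ] ℂ)
    (hτ1 : τ 1 = 1)
    (hτpos : ∀ x : A, 0 ≤ (τ (star x * x)).re)
    (hτreal : ∀ x : A, (τ (star x * x)).im = 0)
    (hτtr : ∀ x y : A, τ (x * y) = τ (y * x))
    (m : ℕ) (hm : 0 < m) (pm : Fin m → Fin m → A)
    (hpm_mul : ∀ i j l r, pm i j * pm l r = if j = l then pm i r else 0)
    (hpm_star : ∀ i j, star (pm i j) = pm j i)
    (hpm_sum : ∑ i, pm i i = 1)
    (q : ℕ → A)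
    (hq_sa : ∀ k, star (q k) = q k)
    (hq_idem : ∀ k, q k * q k = q k)
    (hq_pos : ∀ k, 0 < (τ (q k)).re)
    (hpm_lim : ∀ i j, Tendsto
      (fun k => traceNorm2 τ (pm i j * q k - q k * pm i j) / traceNorm2 τ (q k))
      atTop (𝓝 0))
    (p : A) (hp_sa : star p = p) (hp_idem : p * p = p)
    (hp_ge : p * pm ⟨0, hm⟩ ⟨0, hm⟩ = pm ⟨0, hm⟩ ⟨0, hm⟩)
    (hp_lim : Tendsto (fun k => traceNorm2 τ (p * q k - q k * p) / traceNorm2 τ (q k))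
      atTop (𝓝 0)) :
    (1 : ℝ) / m ≤
      Filter.liminf
        (fun k => (traceNorm2 τ (p * q k * p)) ^ 2 / (traceNorm2 τ (q k)) ^ 2)
        atTop := by
  have hsq := aux_sq τ hτpos
  set z : Fin m := ⟨0, hm⟩ with hz
  have hmR : (0 : ℝ) < m := by exact_mod_cast hm
  have hqn : ∀ k, traceNorm2 τ (q k) ^ 2 = (τ (q k)).re := fun k => by
    rw [hsq, hq_sa, hq_idem]
  have hpz : pm z z * p = pm z z := by
    have := congrArg star hp_ge
    simpa only [star_mul, hpm_star, hp_sa] using this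
  have hzz : pm z z * pm z z = pm z z := by simp [hpm_mul]
  -- the exact formula for the corner mass
  have hcorner : ∀ k, traceNorm2 τ (p * q k * p) ^ 2 =
      (τ (p * q k)).re - traceNorm2 τ (p * q k - q k * p) ^ 2 / 2 := by
    intro k
    have h := aux_comm τ hτtr p (q k) (hq_sa k) (hq_idem k)
    rw [hp_sa, hp_idem] at h
    have e : star (p * q k * p) * (p * q k * p) = p * (q k * (p * p) * q k * p) := by
      simp only [star_mul, hp_sa, hq_sa]
      rw [show p * (q k * p) * (p * q k * p) = p * (q k * (p * p) * q k * p) by noncomm_ring]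
    have e2 : q k * p * q k * p * p = q k * (p * q k * (p * p)) := by noncomm_ring
    have e3 : τ (star (p * q k * p) * (p * q k * p)) = τ (p * q k * p * q k) := by
      rw [e, hp_idem, hτtr, e2, hp_idem, hτtr]
    rw [hsq, hsq, e3, h]
    simp
    ring
  have hlow : ∀ k, (τ (pm z z * q k)).re ≤ (τ (p * q k)).re := by
    intro k
    have h := aux_nonneg τ hτpos hτtr (p - pm z z) (q k)
      (by simp only [star_sub, hp_sa, hpm_star])
      (by rw [sub_mul, mul_sub, mul_sub, hp_idem, hp_ge, hpz, hzz]; simp) (hq_sa k) (hq_idem k)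
    rw [sub_mul, map_sub, Complex.sub_re] at h
    linarith
  have hup : ∀ k, (τ (p * q k)).re ≤ (τ (q k)).re := by
    intro k
    have h := aux_nonneg τ hτpos hτtr (1 - p) (q k)
      (by simp only [star_sub, hp_sa, star_one])
      (by rw [sub_mul, mul_sub, mul_sub, hp_idem]; simp) (hq_sa k) (hq_idem k)
    rw [sub_mul, map_sub, Complex.sub_re, one_mul] at h
    linarith
  have hdiag : ∀ k i, (τ (pm i i * q k)).re ≤ (τ (pm z z * q k)).re +
      traceNorm2 τ (pm z i * q k - q k * pm z i) ^ 2 := by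
    intro k i
    have h1 := aux_comm τ hτtr (pm z i) (q k) (hq_sa k) (hq_idem k)
    have h2 := aux_le τ hτpos hτtr (pm z i) (q k) (hq_sa k) (hq_idem k)
    have a1 : star (pm z i) * pm z i = pm i i := by simp [hpm_star, hpm_mul]
    have a2 : pm z i * star (pm z i) = pm z z := by simp [hpm_star, hpm_mul]
    rw [a2] at h2
    rw [a1, a2] at h1
    rw [hsq, h1]
    simp only [Complex.add_re, Complex.sub_re, Complex.mul_re, Complex.re_ofNat,
      Complex.im_ofNat]
    linarith
  have hsum : ∀ k, (τ (q k)).re ≤ m * (τ (pm z z * q k)).re +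
      ∑ i, traceNorm2 τ (pm z i * q k - q k * pm z i) ^ 2 := by
    intro k
    have e : (τ (q k)).re = ∑ i, (τ (pm i i * q k)).re := by
      rw [← Complex.re_sum, ← map_sum, ← Finset.sum_mul, hpm_sum, one_mul]
    rw [e]
    refine (Finset.sum_le_sum fun i _ => hdiag k i).trans ?_
    rw [Finset.sum_add_distrib]
    simp
  set g : ℕ → ℝ := fun k => 1 / m - (1 / m) * ∑ i,
      (traceNorm2 τ (pm z i * q k - q k * pm z i) / traceNorm2 τ (q k)) ^ 2
      - (traceNorm2 τ (p * q k - q k * p) / traceNorm2 τ (q k)) ^ 2 / 2 with hg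
  have hgt : Tendsto g atTop (𝓝 (1 / m)) := by
    have h1 : Tendsto (fun k => ∑ i,
        (traceNorm2 τ (pm z i * q k - q k * pm z i) / traceNorm2 τ (q k)) ^ 2)
        atTop (𝓝 (∑ _i : Fin m, (0 : ℝ) ^ 2)) :=
      tendsto_finsetSum _ fun i _ => (hpm_lim z i).pow 2
    have h2 := ((h1.const_mul (1 / (m : ℝ))).const_sub (1 / (m : ℝ))).sub
      ((hp_lim.pow 2).div_const 2)
    simpa [hg] using h2
  have hge : ∀ k, g k ≤ traceNorm2 τ (p * q k * p) ^ 2 / traceNorm2 τ (q k) ^ 2 := by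
    intro k
    have ht := hq_pos k
    have e : g k = ((1 / m) * ((τ (q k)).re -
        ∑ i, traceNorm2 τ (pm z i * q k - q k * pm z i) ^ 2)
        - traceNorm2 τ (p * q k - q k * p) ^ 2 / 2) / (τ (q k)).re := by
      simp only [hg, div_pow, hqn, ← Finset.sum_div]
      field_simp
    rw [e, hqn, hcorner]
    have h3 : (1 / (m : ℝ)) * ((τ (q k)).re -
        ∑ i, traceNorm2 τ (pm z i * q k - q k * pm z i) ^ 2) ≤ (τ (pm z z * q k)).re := by
      rw [one_div, inv_mul_le_iff₀ hmR]
      linarith [hsum k]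
    have := hlow k
    gcongr
    linarith
  have hle : ∀ k, traceNorm2 τ (p * q k * p) ^ 2 / traceNorm2 τ (q k) ^ 2 ≤ 1 := by
    intro k
    rw [hqn, hcorner, div_le_one (hq_pos k)]
    have := hup k
    have := sq_nonneg (traceNorm2 τ (p * q k - q k * p))
    linarith
  rw [← hgt.liminf_eq]
  exact liminf_le_liminf (Eventually.of_forall hge) hgt.isBoundedUnder_ge
    (IsBoundedUnder.isCoboundedUnder_ge ⟨1, by simpa using ⟨0, fun k _ => hle k⟩⟩)
end

section
/- Let A be a unital C*-algebra with a tracial state τ. Let x₁, x₂ ∈ A be selfadjoint, let α > 0, and let p ∈ A be a projection with Re τ(p) > 0 such that ‖[x₁, p]‖₂ + ‖[x₂, p]‖₂ ≥ α ‖p‖₂. Then ‖[x₁, p]‖ + ‖[x₂, p]‖ ≥ α/√2, where ‖·‖ is the C*-norm. -/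
lemma aux_sq_s9 {A : Type*} [NormedRing A] [StarRing A] [CStarRing A] [CompleteSpace A]
    [NormedAlgebra ℂ A] [StarModule ℂ A] (c : A) :
    ∃ y : A, star c * c = ((‖c‖ ^ 2 : ℝ) : ℂ) • (1 : A) - star y * y := by
  letI : CStarAlgebra A := {}
  letI : PartialOrder A := CStarAlgebra.spectralOrder A
  haveI : StarOrderedRing A := CStarAlgebra.spectralOrderedRing A
  have h := CStarAlgebra.star_mul_le_algebraMap_norm_sq (a := c)
  rw [← sub_nonneg] at h
  obtain ⟨y, hy⟩ := CStarAlgebra.nonneg_iff_eq_star_mul_self.mp h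
  refine ⟨y, ?_⟩
  rw [← hy, Algebra.algebraMap_eq_smul_one, Complex.coe_smul]
  abel

lemma aux_bound {A : Type*} [NormedRing A] [StarRing A] [CStarRing A] [CompleteSpace A]
    [NormedAlgebra ℂ A] [StarModule ℂ A]
    (τ : A →ₗ[ℂ] ℂ)
    (hτpos : ∀ x : A, 0 ≤ (τ (star x * x)).re)
    (hτtr : ∀ x y : A, τ (x * y) = τ (y * x))
    (x : A) (hx : star x = x) (p : A) (hp_sa : star p = p) (hp_idem : p * p = p) :
    traceNorm2 τ (x * p - p * x) ≤ Real.sqrt 2 * ‖x * p - p * x‖ * traceNorm2 τ p := by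
  obtain ⟨c, hc⟩ : ∃ c, c = x * p - p * x := ⟨_, rfl⟩
  have hs : star c = -c := by rw [hc]; simp [hx, hp_sa]
  have hd : c = c * p + p * c := by
    rw [hc]
    simp only [sub_mul, mul_sub, mul_assoc, hp_idem]
    simp only [← mul_assoc, hp_idem]
    abel
  rw [← hc]
  have h1 : τ (star c * c) = 2 * τ (p * (star c * c) * p) := by
    have e1 : τ (star c * c) = τ (star c * (c * p)) + τ (star c * (p * c)) := by
      rw [← map_add, ← mul_add, ← hd]
    have e2 : τ (star c * (c * p)) = τ (p * (star c * c) * p) := by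
      rw [hτtr (p * (star c * c)) p, ← mul_assoc p p, hp_idem] at *
      rw [hτtr p, mul_assoc]
    have e3 : τ (star c * (p * c)) = τ (star c * (c * p)) := by
      rw [hs, neg_mul, neg_mul, map_neg, map_neg, hτtr c (p * c), mul_assoc, hτtr p, mul_assoc]
    rw [e1, e3, e2]; ring
  obtain ⟨y, hy⟩ := aux_sq_s9 c
  have h2 : p * (star c * c) * p = ((‖c‖ ^ 2 : ℝ) : ℂ) • p - star (y * p) * (y * p) := by
    rw [hy]
    simp only [star_mul, hp_sa, mul_sub, sub_mul, mul_smul_comm, smul_mul_assoc, mul_one, hp_idem,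
      mul_assoc]
  have h3 : (τ (star c * c)).re ≤ 2 * ‖c‖ ^ 2 * (τ p).re := by
    have := hτpos (y * p)
    rw [h1, h2, map_sub, map_smul, smul_eq_mul]
    simp only [Complex.mul_re, Complex.sub_re, Complex.re_ofNat, Complex.im_ofNat, zero_mul,
      sub_zero, Complex.ofReal_re, Complex.ofReal_im]
    linarith
  unfold traceNorm2
  rw [hp_sa, hp_idem]
  calc _ ≤ Real.sqrt (2 * ‖c‖ ^ 2 * (τ p).re) := Real.sqrt_le_sqrt h3
    _ = _ := by
      rw [Real.sqrt_mul (by positivity), Real.sqrt_mul (by positivity), Real.sqrt_sq (norm_nonneg c)]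

/-- For selfadjoint `x₁, x₂` and a projection `p` of positive trace with
`‖[x₁,p]‖₂ + ‖[x₂,p]‖₂ ≥ α‖p‖₂`, one has `‖[x₁,p]‖ + ‖[x₂,p]‖ ≥ α/√2`. -/
theorem opNorm_commutator_ge_of_traceNorm_commutator_ge_selfAdjoint
    {A : Type*} [NormedRing A] [StarRing A] [CStarRing A] [CompleteSpace A]
    [NormedAlgebra ℂ A] [StarModule ℂ A]
    (τ : A →ₗ[ℂ] ℂ)
    (hτ1 : τ 1 = 1)
    (hτpos : ∀ x : A, 0 ≤ (τ (star x * x)).re)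
    (hτreal : ∀ x : A, (τ (star x * x)).im = 0)
    (hτtr : ∀ x y : A, τ (x * y) = τ (y * x))
    (x₁ x₂ : A) (hx₁ : star x₁ = x₁) (hx₂ : star x₂ = x₂)
    (α : ℝ) (hα : 0 < α)
    (p : A) (hp_sa : star p = p) (hp_idem : p * p = p) (hp_pos : 0 < (τ p).re)
    (h : α * traceNorm2 τ p ≤
      traceNorm2 τ (x₁ * p - p * x₁) + traceNorm2 τ (x₂ * p - p * x₂)) :
    α / Real.sqrt 2 ≤ ‖x₁ * p - p * x₁‖ + ‖x₂ * p - p * x₂‖ := by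
  have b1 := aux_bound τ hτpos hτtr x₁ hx₁ p hp_sa hp_idem
  have b2 := aux_bound τ hτpos hτtr x₂ hx₂ p hp_sa hp_idem
  have hp : 0 < traceNorm2 τ p := by
    unfold traceNorm2
    rw [hp_sa, hp_idem]
    exact Real.sqrt_pos.mpr hp_pos
  rw [div_le_iff₀ (by positivity)]
  refine le_of_mul_le_mul_right ?_ hp
  linarith
end

section
/- Let A be a unital C*-algebra with a tracial state τ. Let u₁, u₂ ∈ A be unitary elements, let α > 0, and let p ∈ A be a projection with Re τ(p) > 0 such that ‖[u₁, p]‖₂ + ‖[u₂, p]‖₂ ≥ α ‖p‖₂. Then ‖[u₁, p]‖ + ‖[u₂, p]‖ ≥ α/√2, where ‖·‖ is the C*-norm. -/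
theorem aux_exists_sqrt {A : Type*} [CStarAlgebra A] (x : A) :
    ∃ y : A, algebraMap ℝ A (‖x‖ ^ 2) - star x * x = star y * y := by
  letI : PartialOrder A := CStarAlgebra.spectralOrder A
  letI : StarOrderedRing A := CStarAlgebra.spectralOrderedRing A
  have h : star x * x ≤ algebraMap ℝ A (‖x‖ ^ 2) :=
    CStarAlgebra.star_mul_le_algebraMap_norm_sq
  exact CStarAlgebra.nonneg_iff_eq_star_mul_self.mp (sub_nonneg.mpr h)

theorem aux_exists_sqrt' {A : Type*} [NormedRing A] [StarRing A] [CStarRing A] [CompleteSpace A]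
    [NormedAlgebra ℂ A] [StarModule ℂ A] (x : A) :
    ∃ y : A, ((‖x‖ ^ 2 : ℝ) : ℂ) • (1 : A) - star x * x = star y * y := by
  letI : CStarAlgebra A := {}
  obtain ⟨y, hy⟩ := aux_exists_sqrt x
  refine ⟨y, ?_⟩
  rw [← hy, Algebra.algebraMap_eq_smul_one]
  rfl

theorem aux_trace_le {A : Type*} [NormedRing A] [StarRing A] [CStarRing A] [CompleteSpace A]
    [NormedAlgebra ℂ A] [StarModule ℂ A] (τ : A →ₗ[ℂ] ℂ)
    (hτpos : ∀ x : A, 0 ≤ (τ (star x * x)).re)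
    (p : A) (hp_sa : star p = p) (hp_idem : p * p = p) (c : A) :
    (τ (p * (star c * c) * p)).re ≤ ‖c‖ ^ 2 * (τ p).re := by
  obtain ⟨y, hy⟩ := aux_exists_sqrt' c
  have h := hτpos (y * p)
  have e : star (y * p) * (y * p) = ((‖c‖ ^ 2 : ℝ) : ℂ) • p - p * (star c * c) * p := by
    rw [star_mul, hp_sa]
    calc p * star y * (y * p) = p * (star y * y) * p := by noncomm_ring
      _ = _ := by
        rw [← hy, mul_sub, sub_mul, mul_smul_comm, smul_mul_assoc, mul_one, hp_idem]
  rw [e, map_sub, map_smul, smul_eq_mul, Complex.sub_re, Complex.re_ofReal_mul] at h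
  linarith

theorem aux_comm_s10 {A : Type*} [NormedRing A] [StarRing A] [CStarRing A] [CompleteSpace A]
    [NormedAlgebra ℂ A] [StarModule ℂ A] (τ : A →ₗ[ℂ] ℂ)
    (hτpos : ∀ x : A, 0 ≤ (τ (star x * x)).re)
    (hτtr : ∀ x y : A, τ (x * y) = τ (y * x))
    (p : A) (hp_sa : star p = p) (hp_idem : p * p = p) (u : A) :
    traceNorm2 τ (u * p - p * u) ≤ ‖u * p - p * u‖ * (Real.sqrt 2 * traceNorm2 τ p) := by
  set c := u * p - p * u with hc
  have hcp : c * p + p * c = c := by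
    have h1 : c * p = u * p - p * u * p := by
      rw [hc, sub_mul, mul_assoc u, hp_idem]
    have h2 : p * c = p * u * p - p * u := by
      rw [hc, mul_sub, ← mul_assoc p p, hp_idem, ← mul_assoc]
    rw [h1, h2, hc]; abel
  have h1 := aux_trace_le τ hτpos p hp_sa hp_idem c
  have h2 := aux_trace_le τ hτpos p hp_sa hp_idem (star c)
  rw [norm_star, star_star] at h2
  have t1 : τ (p * (star c * c) * p) = τ (star c * (c * p)) := by
    rw [hτtr, ← mul_assoc, hp_idem, hτtr, mul_assoc]
  have t2 : τ (p * (c * star c) * p) = τ (star c * (p * c)) := by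
    rw [hτtr, ← mul_assoc, hp_idem, ← mul_assoc, hτtr]
  have key : (τ (star c * c)).re ≤ ‖c‖ ^ 2 * (2 * (τ p).re) := by
    have : τ (star c * c) = τ (star c * (c * p)) + τ (star c * (p * c)) := by
      rw [← map_add, ← mul_add, hcp]
    rw [this, Complex.add_re, ← t1, ← t2]
    linarith
  unfold traceNorm2
  rw [hp_sa, hp_idem, ← Real.sqrt_mul (by norm_num)]
  calc _ ≤ Real.sqrt (‖c‖ ^ 2 * (2 * (τ p).re)) := Real.sqrt_le_sqrt key
    _ = _ := by rw [Real.sqrt_mul (sq_nonneg _), Real.sqrt_sq (norm_nonneg _)]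

/-- For unitaries `u₁, u₂` and a projection `p` of positive trace with
`‖[u₁,p]‖₂ + ‖[u₂,p]‖₂ ≥ α‖p‖₂`, one has `‖[u₁,p]‖ + ‖[u₂,p]‖ ≥ α/√2`. -/
theorem opNorm_commutator_ge_of_traceNorm_commutator_ge_unitary
    {A : Type*} [NormedRing A] [StarRing A] [CStarRing A] [CompleteSpace A]
    [NormedAlgebra ℂ A] [StarModule ℂ A]
    (τ : A →ₗ[ℂ] ℂ)
    (hτ1 : τ 1 = 1)
    (hτpos : ∀ x : A, 0 ≤ (τ (star x * x)).re)
    (hτreal : ∀ x : A, (τ (star x * x)).im = 0)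
    (hτtr : ∀ x y : A, τ (x * y) = τ (y * x))
    (u₁ u₂ : A) (hu₁ : u₁ ∈ unitary A) (hu₂ : u₂ ∈ unitary A)
    (α : ℝ) (hα : 0 < α)
    (p : A) (hp_sa : star p = p) (hp_idem : p * p = p) (hp_pos : 0 < (τ p).re)
    (h : α * traceNorm2 τ p ≤
      traceNorm2 τ (u₁ * p - p * u₁) + traceNorm2 τ (u₂ * p - p * u₂)) :
    α / Real.sqrt 2 ≤ ‖u₁ * p - p * u₁‖ + ‖u₂ * p - p * u₂‖ := by
  have e1 := aux_comm_s10 τ hτpos hτtr p hp_sa hp_idem u₁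
  have e2 := aux_comm_s10 τ hτpos hτtr p hp_sa hp_idem u₂
  have hp : 0 < traceNorm2 τ p := by
    unfold traceNorm2
    rw [hp_sa, hp_idem]
    exact Real.sqrt_pos.mpr hp_pos
  have h2 : 0 < Real.sqrt 2 := Real.sqrt_pos.mpr (by norm_num)
  rw [div_le_iff₀ h2]
  refine le_of_mul_le_mul_right ?_ hp
  nlinarith [h, e1, e2]
end

section
/- Let A be a unital C*-algebra with a faithful tracial state τ and let x ∈ A. The following are equivalent: (i) x lies in the C*-norm closure of Red(A); (ii) there exists a sequence {p_n}_{n=1}^∞ of projections in A with 0 < Re τ(p_n) ≤ 1/2 for all n and lim_{n→∞} ‖[x, p_n]‖ = 0; (iii) there exists a sequence {p_n}_{n=1}^∞ of projections in A with 0 < Re τ(p_n) ≤ 1/2 for all n such that lim_{n→∞} ‖[y, p_n]‖ = 0 for every y ∈ C*(x). -/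
open Filter Topology

/-- The set of reducible elements of a unital *-ring: those commuting with some
nontrivial projection. -/
def RedSet (A : Type*) [Ring A] [StarRing A] : Set A :=
  {x : A | ∃ p : A, star p = p ∧ p * p = p ∧ p ≠ 0 ∧ p ≠ 1 ∧ x * p = p * x}

theorem proj_norm_le_one {A : Type*} [NormedRing A] [StarRing A] [CStarRing A]
    {p : A} (h1 : star p = p) (h2 : p * p = p) : ‖p‖ ≤ 1 := by
  have h : ‖p‖ = ‖p‖ * ‖p‖ := by
    have := CStarRing.norm_star_mul_self (x := p)
    rwa [h1, h2] at this
  nlinarith [norm_nonneg p]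

theorem comm_norm_le {A : Type*} [NormedRing A] {p : A} (hp : ‖p‖ ≤ 1) (z : A) :
    ‖z * p - p * z‖ ≤ 2 * ‖z‖ := by
  calc ‖z * p - p * z‖ ≤ ‖z * p‖ + ‖p * z‖ := norm_sub_le _ _
    _ ≤ ‖z‖ * ‖p‖ + ‖p‖ * ‖z‖ := add_le_add (norm_mul_le _ _) (norm_mul_le _ _)
    _ ≤ 2 * ‖z‖ := by nlinarith [norm_nonneg z]

theorem tendsto_comm_closure {A : Type*} [NormedRing A] [StarRing A] [CStarRing A]
    [NormedAlgebra ℂ A] [StarModule ℂ A] (x : A) (p : ℕ → A)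
    (hp1 : ∀ n, star (p n) = p n) (hp2 : ∀ n, p n * p n = p n)
    (h : Tendsto (fun n => ‖x * p n - p n * x‖) atTop (𝓝 0)) :
    ∀ y ∈ (StarAlgebra.adjoin ℂ {x}).topologicalClosure,
      Tendsto (fun n => ‖y * p n - p n * y‖) atTop (𝓝 0) := by
  have hn : ∀ n, ‖p n‖ ≤ 1 := fun n => proj_norm_le_one (hp1 n) (hp2 n)
  have key : ∀ y ∈ StarAlgebra.adjoin ℂ {x},
      Tendsto (fun n => ‖y * p n - p n * y‖) atTop (𝓝 0) := by
    intro y hy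
    induction hy using StarAlgebra.adjoin_induction with
    | mem y hy =>
      rw [Set.mem_singleton_iff] at hy
      rwa [hy]
    | algebraMap r =>
      have : ∀ n, algebraMap ℂ A r * p n - p n * algebraMap ℂ A r = 0 := fun n => by
        rw [Algebra.commutes r (p n), sub_self]
      simp [this]
    | add a b _ _ ha hb =>
      refine squeeze_zero (fun _ => norm_nonneg _) (fun n => ?_) (by simpa using ha.add hb)
      rw [show (a + b) * p n - p n * (a + b) = (a * p n - p n * a) + (b * p n - p n * b) by
        noncomm_ring]
      exact norm_add_le _ _
    | mul a b _ _ ha hb =>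
      refine squeeze_zero (fun _ => norm_nonneg _) (fun n => ?_)
        (by simpa using (ha.mul_const ‖b‖).add (hb.const_mul ‖a‖))
      rw [show (a * b) * p n - p n * (a * b)
          = (a * p n - p n * a) * b + a * (b * p n - p n * b) by noncomm_ring]
      exact (norm_add_le _ _).trans (add_le_add (norm_mul_le _ _) (norm_mul_le _ _))
    | star a _ ha =>
      refine ha.congr fun n => ?_
      rw [← norm_star (a * p n - p n * a), ← norm_neg]
      simp [hp1]
  intro y hy
  have hy' : y ∈ closure ((StarAlgebra.adjoin ℂ {x} : StarSubalgebra ℂ A) : Set A) := hy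
  rw [Metric.mem_closure_iff] at hy'
  rw [Metric.tendsto_atTop]
  intro ε hε
  obtain ⟨z, hz, hd⟩ := hy' (ε / 4) (by linarith)
  obtain ⟨N, hN⟩ := (Metric.tendsto_atTop.1 (key z hz)) (ε / 4) (by linarith)
  refine ⟨N, fun n hnN => ?_⟩
  have h1 := hN n hnN
  rw [Real.dist_eq, sub_zero, abs_norm] at h1 ⊢
  rw [dist_eq_norm] at hd
  have h2 := comm_norm_le (hn n) (y - z)
  have h3 := norm_add_le ((y - z) * p n - p n * (y - z)) (z * p n - p n * z)
  rw [show ((y - z) * p n - p n * (y - z)) + (z * p n - p n * z) = y * p n - p n * y by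
    noncomm_ring] at h3
  linarith

theorem compress_norm_le {A : Type*} [NormedRing A] {p : A} (hp : ‖p‖ ≤ 1) (hq : ‖1 - p‖ ≤ 1)
    (h2 : p * p = p) (x : A) :
    ‖x - (p * x * p + (1 - p) * x * (1 - p))‖ ≤ 2 * ‖x * p - p * x‖ := by
  have e : x - (p * x * p + (1 - p) * x * (1 - p))
      = (x * p - p * x) * p - (x * p - p * x) * (1 - p) := by
    have h3 : x * p * p = x * p := by rw [mul_assoc, h2]
    simp only [sub_mul, mul_sub, mul_one, one_mul, h3]
    abel
  rw [e]
  refine (norm_sub_le _ _).trans ?_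
  have a := norm_mul_le (x * p - p * x) p
  have b := norm_mul_le (x * p - p * x) (1 - p)
  nlinarith [norm_nonneg (x * p - p * x)]

/-- For `x` in a unital C*-algebra with faithful tracial state `τ`,
membership in the norm closure of the reducible elements is equivalent to the
existence of a sequence of projections of trace in `(0, 1/2]` asymptotically
commuting with `x` (in operator norm), and also to the existence of such a sequence
asymptotically commuting with every element of `C*(x)`. -/
theorem mem_closure_red_iff_asymptotically_commuting_projections
    {A : Type*} [NormedRing A] [StarRing A] [CStarRing A] [CompleteSpace A]
    [NormedAlgebra ℂ A] [StarModule ℂ A]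
    (τ : A →ₗ[ℂ] ℂ)
    (hτ1 : τ 1 = 1)
    (hτpos : ∀ x : A, 0 ≤ (τ (star x * x)).re)
    (hτreal : ∀ x : A, (τ (star x * x)).im = 0)
    (hτtr : ∀ x y : A, τ (x * y) = τ (y * x))
    (hτfaithful : ∀ x : A, τ (star x * x) = 0 → x = 0)
    (x : A) :
    (x ∈ closure (RedSet A) ↔
      ∃ p : ℕ → A,
        (∀ n, star (p n) = p n ∧ p n * p n = p n ∧
          0 < (τ (p n)).re ∧ (τ (p n)).re ≤ 1 / 2) ∧
        Tendsto (fun n => ‖x * p n - p n * x‖) atTop (𝓝 0)) ∧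
    (x ∈ closure (RedSet A) ↔
      ∃ p : ℕ → A,
        (∀ n, star (p n) = p n ∧ p n * p n = p n ∧
          0 < (τ (p n)).re ∧ (τ (p n)).re ≤ 1 / 2) ∧
        ∀ y ∈ (StarAlgebra.adjoin ℂ {x}).topologicalClosure,
          Tendsto (fun n => ‖y * p n - p n * y‖) atTop (𝓝 0)) := by
  have hp_re : ∀ p : A, star p = p → p * p = p → p ≠ 0 → 0 < (τ p).re := by
    intro p h1 h2 h0
    have ha := hτpos p
    have hb := hτreal p
    have hc := hτfaithful p
    rw [h1, h2] at ha hb hc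
    exact lt_of_le_of_ne ha fun h => h0 (hc (Complex.ext h.symm hb))
  have one_sub : ∀ p : A, star p = p → p * p = p →
      star (1 - p) = 1 - p ∧ (1 - p) * (1 - p) = 1 - p := by
    intro p h1 h2
    refine ⟨by simp [h1], ?_⟩
    simp [sub_mul, mul_sub, h2]
  have fwd : x ∈ closure (RedSet A) → ∃ p : ℕ → A,
        (∀ n, star (p n) = p n ∧ p n * p n = p n ∧
          0 < (τ (p n)).re ∧ (τ (p n)).re ≤ 1 / 2) ∧
        Tendsto (fun n => ‖x * p n - p n * x‖) atTop (𝓝 0) := by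
    intro hx
    obtain ⟨u, hu, hlim⟩ := mem_closure_iff_seq_limit.1 hx
    have ex : ∀ n, ∃ p : A, (star p = p ∧ p * p = p ∧
          0 < (τ p).re ∧ (τ p).re ≤ 1 / 2) ∧ u n * p = p * u n := by
      intro n
      obtain ⟨p, h1, h2, h0, hne, hc⟩ := hu n
      by_cases ht : (τ p).re ≤ 1 / 2
      · exact ⟨p, ⟨h1, h2, hp_re p h1 h2 h0, ht⟩, hc⟩
      · obtain ⟨h1', h2'⟩ := one_sub p h1 h2
        refine ⟨1 - p, ⟨h1', h2', hp_re _ h1' h2' (sub_ne_zero.2 hne.symm), ?_⟩, ?_⟩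
        · rw [map_sub, hτ1, Complex.sub_re, Complex.one_re]
          linarith
        · rw [mul_sub, sub_mul, hc, mul_one, one_mul]
    choose p hp hc using ex
    refine ⟨p, hp, ?_⟩
    have hl : Tendsto (fun n => 2 * ‖x - u n‖) atTop (𝓝 0) := by
      simpa using ((tendsto_const_nhds (x := x)).sub hlim).norm.const_mul 2
    refine squeeze_zero (fun _ => norm_nonneg _) (fun n => ?_) hl
    have := comm_norm_le (proj_norm_le_one (hp n).1 (hp n).2.1) (x - u n)
    rwa [sub_mul, mul_sub, hc n, sub_sub_sub_cancel_right] at this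
  have bwd : (∃ p : ℕ → A,
        (∀ n, star (p n) = p n ∧ p n * p n = p n ∧
          0 < (τ (p n)).re ∧ (τ (p n)).re ≤ 1 / 2) ∧
        Tendsto (fun n => ‖x * p n - p n * x‖) atTop (𝓝 0)) → x ∈ closure (RedSet A) := by
    rintro ⟨p, hp, hl⟩
    rw [Metric.mem_closure_iff]
    intro ε hε
    obtain ⟨N, hN⟩ := (Metric.tendsto_atTop.1 hl) (ε / 2) (by linarith)
    have h := hN N le_rfl
    rw [Real.dist_eq, sub_zero, abs_norm] at h
    obtain ⟨h1, h2, h3, h4⟩ := hp N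
    obtain ⟨h1', h2'⟩ := one_sub _ h1 h2
    refine ⟨p N * x * p N + (1 - p N) * x * (1 - p N), ⟨p N, h1, h2, ?_, ?_, ?_⟩, ?_⟩
    · intro h0
      simp [h0] at h3
    · intro h0
      rw [h0, hτ1] at h4
      norm_num at h4
    · have e1 : (1 - p N) * p N = 0 := by rw [sub_mul, h2, one_mul, sub_self]
      have e2 : p N * (1 - p N) = 0 := by rw [mul_sub, h2, mul_one, sub_self]
      rw [add_mul, mul_add, mul_assoc _ (1 - p N), e1, mul_assoc _ (p N) (p N), h2,
        ← mul_assoc (p N) ((1 - p N) * x), ← mul_assoc (p N) (1 - p N), e2,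
        ← mul_assoc (p N) (p N * x), ← mul_assoc (p N) (p N), h2]
      simp
    · rw [dist_eq_norm]
      have := compress_norm_le (proj_norm_le_one h1 h2) (proj_norm_le_one h1' h2') h2 x
      linarith
  refine ⟨⟨fwd, bwd⟩, fun hx => ?_, ?_⟩
  · obtain ⟨p, hp, hl⟩ := fwd hx
    exact ⟨p, hp, tendsto_comm_closure x p (fun n => (hp n).1) (fun n => (hp n).2.1) hl⟩
  · rintro ⟨p, hp, hl⟩
    exact bwd ⟨p, hp, hl x (StarSubalgebra.le_topologicalClosure _
      (StarAlgebra.subset_adjoin ℂ {x} rfl))⟩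
end

section
/- Let A be a unital C*-algebra with a tracial state τ. Suppose x₁, x₂ ∈ A are selfadjoint and α > 0 satisfies ‖[x₁, y]‖₂ + ‖[x₂, y]‖₂ ≥ α ‖y − τ(y)·1‖₂ for every y ∈ A. Then there exist unitary elements u₁, u₂ ∈ A and β > 0 such that ‖[u₁, y]‖₂ + ‖[u₂, y]‖₂ ≥ β ‖y − τ(y)·1‖₂ for every y ∈ A. (In fact one may take u_i = x_i/λ + i·(1 − x_i²/λ²)^{1/2} for any λ > max(‖x₁‖, ‖x₂‖), where the square root is given by continuous functional calculus, and β = α/λ.) -/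
open Complex in
/-- A selfadjoint contraction is half of `u + u*` for some unitary `u`. -/
lemma exists_unitary_add_star_aux {A : Type*} [NormedRing A] [StarRing A] [CStarRing A]
    [CompleteSpace A] [NormedAlgebra ℂ A] [StarModule ℂ A]
    (x : A) (hx : star x = x) (l : ℝ) (hl : 0 < l) (hxl : ‖x‖ ≤ l) :
    ∃ u ∈ unitary A, (2 : ℂ) • x = (l : ℂ) • (u + star u) := by
  let : CStarAlgebra A := { }
  let : PartialOrder A := CStarAlgebra.spectralOrder A
  have : StarOrderedRing A := CStarAlgebra.spectralOrderedRing A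
  have hsa : IsSelfAdjoint (((l⁻¹ : ℝ) : ℂ) • x) := by
    rw [IsSelfAdjoint, star_smul, hx]
    congr 1
    exact Complex.conj_ofReal _
  have hn : ‖((l⁻¹ : ℝ) : ℂ) • x‖ ≤ 1 := by
    rw [norm_smul, Complex.norm_real, Real.norm_of_nonneg (by positivity), inv_mul_le_iff₀ hl]
    simpa using hxl
  let a : selfAdjoint A := ⟨((l⁻¹ : ℝ) : ℂ) • x, hsa⟩
  refine ⟨selfAdjoint.unitarySelfAddISMul a hn, SetLike.coe_mem _, ?_⟩
  have h1 := selfAdjoint.star_coe_unitarySelfAddISMul a hn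
  rw [h1]
  have h2 : ((selfAdjoint.unitarySelfAddISMul a hn : unitary A) : A)
    = (a : A) + I • CFC.sqrt (1 - (a : A) ^ 2 : A) := rfl
  have h3 : (x : A) = (l : ℂ) • (a : A) := by
    have hl' : (l : ℂ) ≠ 0 := by exact_mod_cast hl.ne'
    simp [a, smul_smul, hl']
  rw [h2]
  conv_lhs => rw [h3]
  module

lemma traceNorm2_comm_aux {A : Type*} [NormedRing A] [StarRing A] [CStarRing A]
    [CompleteSpace A] [NormedAlgebra ℂ A] [StarModule ℂ A]
    (τ : A →ₗ[ℂ] ℂ)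
    (hτpos : ∀ x : A, 0 ≤ (τ (star x * x)).re)
    (hτtr : ∀ x y : A, τ (x * y) = τ (y * x))
    (x u : A) (hu : u ∈ unitary A) (l : ℝ) (hl : 0 < l)
    (hxu : (2 : ℂ) • x = (l : ℂ) • (u + star u)) (y : A) :
    traceNorm2 τ (x * y - y * x) ≤ l * traceNorm2 τ (u * y - y * u) := by
  have hu1 : star u * u = 1 := (Unitary.mem_iff.1 hu).1
  have hu2 : u * star u = 1 := (Unitary.mem_iff.1 hu).2
  set a := u * y - y * u with ha
  set b := star u * y - y * star u with hb
  have hba : b = -(star u * a * star u) := by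
    have : star u * a * star u = (star u * u) * y * star u - star u * y * (u * star u) := by
      rw [ha]; noncomm_ring
    rw [this, hu1, hu2, hb]; noncomm_ring
  have hbb : τ (star b * b) = τ (star a * a) := by
    have e : star b * b = u * (star a * a * star u) := by
      rw [hba]
      simp only [star_neg, star_mul, star_star, neg_mul_neg]
      have : u * (star a * u) * (star u * a * star u) = u * (star a * (u * star u) * a * star u) := by
        noncomm_ring
      rw [this, hu2, mul_one]
    rw [e, hτtr, mul_assoc, hu1, mul_one]
  have hc : (2 : ℂ) • (x * y - y * x) = (l : ℂ) • (a + b) := by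
    have : (2 : ℂ) • (x * y - y * x) = ((2 : ℂ) • x) * y - y * ((2 : ℂ) • x) := by
      simp [smul_sub]
    rw [this, hxu, smul_mul_assoc, mul_smul_comm, ← smul_sub, ha, hb]
    congr 1
    noncomm_ring
  have hc' : x * y - y * x = ((l / 2 : ℝ) : ℂ) • (a + b) := by
    have : x * y - y * x = (2⁻¹ : ℂ) • (2 : ℂ) • (x * y - y * x) := by
      simp [smul_smul]
    rw [this, hc, smul_smul]
    congr 1
    push_cast; ring
  have hab : (τ (star (a + b) * (a + b))).re ≤ 4 * (τ (star a * a)).re := by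
    have h1 : star (a + b) * (a + b) + star (a - b) * (a - b)
        = (2 : ℂ) • (star a * a) + (2 : ℂ) • (star b * b) := by
      simp only [star_add, star_sub, two_smul]; noncomm_ring
    have h2 := congrArg (fun z => (τ z).re) h1
    simp only [map_add, map_smul, hbb, Complex.add_re, smul_eq_mul, Complex.mul_re,
      Complex.re_ofNat, Complex.im_ofNat] at h2
    have := hτpos (a - b)
    linarith
  have hs : (τ (star (x * y - y * x) * (x * y - y * x))).re
      = (l / 2) ^ 2 * (τ (star (a + b) * (a + b))).re := by
    have hst : star ((l / 2 : ℝ) : ℂ) = ((l / 2 : ℝ) : ℂ) := Complex.conj_ofReal _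
    rw [hc', star_smul, hst, smul_mul_smul_comm, map_smul, smul_eq_mul, ← Complex.ofReal_mul,
      Complex.re_ofReal_mul]
    ring
  unfold traceNorm2
  apply Real.sqrt_le_iff.2
  refine ⟨by positivity, ?_⟩
  rw [hs, mul_pow, Real.sq_sqrt (hτpos a)]
  nlinarith [mul_le_mul_of_nonneg_left hab (sq_nonneg l)]

/-- If two selfadjoint elements `x₁, x₂` witness a spectral gap
inequality `‖[x₁,y]‖₂ + ‖[x₂,y]‖₂ ≥ α‖y − τ(y)1‖₂`, then two unitaries `u₁, u₂`
witness such an inequality with some constant `β > 0`. -/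
theorem exists_unitary_spectral_gap_of_selfAdjoint_spectral_gap
    {A : Type*} [NormedRing A] [StarRing A] [CStarRing A] [CompleteSpace A]
    [NormedAlgebra ℂ A] [StarModule ℂ A]
    (τ : A →ₗ[ℂ] ℂ)
    (hτ1 : τ 1 = 1)
    (hτpos : ∀ x : A, 0 ≤ (τ (star x * x)).re)
    (hτreal : ∀ x : A, (τ (star x * x)).im = 0)
    (hτtr : ∀ x y : A, τ (x * y) = τ (y * x))
    (x₁ x₂ : A) (hx₁ : star x₁ = x₁) (hx₂ : star x₂ = x₂)
    (α : ℝ) (hα : 0 < α)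
    (h : ∀ y : A, α * traceNorm2 τ (y - τ y • 1) ≤
      traceNorm2 τ (x₁ * y - y * x₁) + traceNorm2 τ (x₂ * y - y * x₂)) :
    ∃ u₁ ∈ unitary A, ∃ u₂ ∈ unitary A, ∃ β : ℝ, 0 < β ∧
      ∀ y : A, β * traceNorm2 τ (y - τ y • 1) ≤
        traceNorm2 τ (u₁ * y - y * u₁) + traceNorm2 τ (u₂ * y - y * u₂) := by

  have hl : 0 < ‖x₁‖ + ‖x₂‖ + 1 := by positivity
  obtain ⟨u₁, hu₁, e₁⟩ := exists_unitary_add_star_aux x₁ hx₁ (‖x₁‖ + ‖x₂‖ + 1) hl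
    (by linarith [norm_nonneg x₂])
  obtain ⟨u₂, hu₂, e₂⟩ := exists_unitary_add_star_aux x₂ hx₂ (‖x₁‖ + ‖x₂‖ + 1) hl
    (by linarith [norm_nonneg x₁])
  refine ⟨u₁, hu₁, u₂, hu₂, α / (‖x₁‖ + ‖x₂‖ + 1), by positivity, fun y => ?_⟩
  have h1 := traceNorm2_comm_aux τ hτpos hτtr x₁ u₁ hu₁ _ hl e₁ y
  have h2 := traceNorm2_comm_aux τ hτpos hτtr x₂ u₂ hu₂ _ hl e₂ y
  have h3 := h y
  rw [div_mul_eq_mul_div, div_le_iff₀ hl]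
  linarith
end

section
/- Let A be a unital C*-algebra with a tracial state τ. Let x ∈ A and α > 0 satisfy ‖[x, y]‖₂ ≥ α ‖y − τ(y)·1‖₂ for every selfadjoint y ∈ A. Then ‖[x, y]‖₂ + ‖[x*, y]‖₂ ≥ α ‖y − τ(y)·1‖₂ for every y ∈ A. -/
theorem tn_parallelogram {A : Type*} [NormedRing A] [StarRing A] [NormedAlgebra ℂ A]
    (τ : A →ₗ[ℂ] ℂ) (u v : A) :
    (τ (star (u + v) * (u + v))).re + (τ (star (u - v) * (u - v))).re
      = 2 * (τ (star u * u)).re + 2 * (τ (star v * v)).re := by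
  have e : star (u + v) * (u + v) + star (u - v) * (u - v)
      = (star u * u + star u * u) + (star v * v + star v * v) := by
    simp only [star_add, star_sub]; noncomm_ring
  have := congrArg (fun z => (τ z).re) e
  simp only [map_add, Complex.add_re] at this
  linarith

theorem tn_smul {A : Type*} [NormedRing A] [StarRing A] [NormedAlgebra ℂ A] [StarModule ℂ A]
    (τ : A →ₗ[ℂ] ℂ) (c : ℂ) (u : A) :
    (τ (star (c • u) * (c • u))).re = Complex.normSq c * (τ (star u * u)).re := by
  rw [star_smul, smul_mul_smul_comm, map_smul, smul_eq_mul]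
  have : star c * c = (Complex.normSq c : ℂ) := by
    rw [Complex.normSq_eq_conj_mul_self]; rfl
  rw [this, Complex.re_ofReal_mul]

theorem tn_herm {A : Type*} [NormedRing A] [StarRing A] [NormedAlgebra ℂ A] [StarModule ℂ A]
    (τ : A →ₗ[ℂ] ℂ) (hτ1 : τ 1 = 1)
    (hτreal : ∀ x : A, (τ (star x * x)).im = 0) (y : A) :
    τ (star y) = star (τ y) := by
  have h1 := hτreal (1 + y)
  have h2 := hτreal (1 + Complex.I • y)
  have h3 := hτreal y
  simp only [star_add, star_one, star_smul, add_mul, mul_add, one_mul, mul_one, map_add, map_smul,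
    smul_mul_smul_comm, hτ1, smul_eq_mul, Complex.add_im, Complex.mul_im, Complex.one_im, h3] at h1 h2
  simp [h3] at h1 h2
  apply Complex.ext
  · simp; linarith
  · simp; linarith

/-- If `‖[x,y]‖₂ ≥ α‖y − τ(y)1‖₂` for all selfadjoint `y`, then
`‖[x,y]‖₂ + ‖[x*,y]‖₂ ≥ α‖y − τ(y)1‖₂` for all `y`. -/
theorem spectral_gap_all_of_spectral_gap_selfAdjoint
    {A : Type*} [NormedRing A] [StarRing A] [CStarRing A] [CompleteSpace A]
    [NormedAlgebra ℂ A] [StarModule ℂ A]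
    (τ : A →ₗ[ℂ] ℂ)
    (hτ1 : τ 1 = 1)
    (hτpos : ∀ x : A, 0 ≤ (τ (star x * x)).re)
    (hτreal : ∀ x : A, (τ (star x * x)).im = 0)
    (hτtr : ∀ x y : A, τ (x * y) = τ (y * x))
    (x : A) (α : ℝ) (hα : 0 < α)
    (h : ∀ y : A, star y = y →
      α * traceNorm2 τ (y - τ y • 1) ≤ traceNorm2 τ (x * y - y * x)) :
    ∀ y : A, α * traceNorm2 τ (y - τ y • 1) ≤
      traceNorm2 τ (x * y - y * x) + traceNorm2 τ (star x * y - y * star x) := by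
  intro y
  have herm := tn_herm τ hτ1 hτreal
  have hstar : ∀ z : A, (τ (star (star z) * star z)).re = (τ (star z * z)).re := by
    intro z; rw [star_star, hτtr]
  -- squared form of the hypothesis
  have hsq : ∀ a : A, star a = a →
      α ^ 2 * (τ (star (a - τ a • 1) * (a - τ a • 1))).re
        ≤ (τ (star (x * a - a * x) * (x * a - a * x))).re := by
    intro a ha
    have h1 := h a ha
    unfold traceNorm2 at h1
    have h2 := pow_le_pow_left₀ (by positivity) h1 2
    rwa [mul_pow, Real.sq_sqrt (hτpos _), Real.sq_sqrt (hτpos _)] at h2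
  have hcs : star ((1 / 2 : ℂ)) = 1 / 2 := by
    apply Complex.ext <;> simp
  have hds : star (-(Complex.I / 2) : ℂ) = Complex.I / 2 := by
    apply Complex.ext <;> simp
    norm_num
  have ha := hsq ((1 / 2 : ℂ) • (y + star y)) (by
    rw [star_smul, star_add, star_star, hcs, add_comm])
  have hb := hsq ((-(Complex.I / 2) : ℂ) • (y - star y)) (by
    rw [star_smul, star_sub, star_star, hds, neg_smul, ← smul_neg, neg_sub])
  have hw : star (y - τ y • (1 : A)) = star y - τ (star y) • 1 := by
    rw [star_sub, star_smul, star_one, herm]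
  have ea : (1 / 2 : ℂ) • (y + star y) - τ ((1 / 2 : ℂ) • (y + star y)) • (1 : A)
      = (1 / 2 : ℂ) • ((y - τ y • 1) + star (y - τ y • (1 : A))) := by
    rw [hw]; simp only [map_smul, map_add, smul_eq_mul]; module
  have eb : (-(Complex.I / 2) : ℂ) • (y - star y)
        - τ ((-(Complex.I / 2) : ℂ) • (y - star y)) • (1 : A)
      = (-(Complex.I / 2) : ℂ) • ((y - τ y • 1) - star (y - τ y • (1 : A))) := by
    rw [hw]; simp only [map_smul, map_sub, smul_eq_mul]; module
  have ca : x * ((1 / 2 : ℂ) • (y + star y)) - ((1 / 2 : ℂ) • (y + star y)) * x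
      = (1 / 2 : ℂ) • ((x * y - y * x) + (x * star y - star y * x)) := by
    rw [mul_smul_comm, smul_mul_assoc, ← smul_sub]; congr 1; noncomm_ring
  have cb : x * ((-(Complex.I / 2) : ℂ) • (y - star y))
        - ((-(Complex.I / 2) : ℂ) • (y - star y)) * x
      = (-(Complex.I / 2) : ℂ) • ((x * y - y * x) - (x * star y - star y * x)) := by
    rw [mul_smul_comm, smul_mul_assoc, ← smul_sub]; congr 1; noncomm_ring
  rw [ea, ca, tn_smul, tn_smul] at ha
  rw [eb, cb, tn_smul, tn_smul] at hb
  have n1 : Complex.normSq (1 / 2) = 1 / 4 := by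
    simp [Complex.normSq_apply]; norm_num
  have n2 : Complex.normSq (-(Complex.I / 2)) = 1 / 4 := by
    simp [Complex.normSq_apply]; norm_num
  rw [n1] at ha
  rw [n2] at hb
  have p1 := tn_parallelogram τ (y - τ y • 1) (star (y - τ y • (1 : A)))
  have p2 := tn_parallelogram τ (x * y - y * x) (x * star y - star y * x)
  rw [hstar] at p1
  have hc : x * star y - star y * x = star (-(star x * y - y * star x)) := by
    simp
  rw [hc, hstar, star_neg, neg_mul_neg] at p2
  rw [hc, star_neg] at ha hb
  set P := (τ (star (x * y - y * x) * (x * y - y * x))).re with hP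
  set Q := (τ (star (star x * y - y * star x) * (star x * y - y * star x))).re with hQ
  set W := (τ (star (y - τ y • 1) * (y - τ y • 1))).re with hW
  have hP0 : 0 ≤ P := hτpos _
  have hQ0 : 0 ≤ Q := hτpos _
  have hW0 : 0 ≤ W := hτpos _
  have key : α ^ 2 * W ≤ (P + Q) / 2 := by
    have p1' := congrArg (fun t => α ^ 2 * t) p1
    rw [mul_add (α ^ 2)] at p1'
    linarith
  show α * Real.sqrt W ≤ Real.sqrt P + Real.sqrt Q
  have hp := Real.sqrt_nonneg P
  have hq := Real.sqrt_nonneg Q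
  refine (sq_le_sq₀ (by positivity) (by positivity)).mp ?_
  rw [mul_pow, Real.sq_sqrt hW0, add_sq, Real.sq_sqrt hP0, Real.sq_sqrt hQ0]
  nlinarith [mul_nonneg hp hq]
end

section
/- Let B be a unital C*-algebra and n ≥ 1. Let p₁, …, pₙ ∈ B be projections with p_k p_l = 0 for k ≠ l and p₁ + ⋯ + pₙ = 1. For each k let w_k ∈ B be selfadjoint with p_k w_k p_k = w_k, invertible in the corner p_k B p_k (i.e. there is v_k ∈ B with p_k v_k p_k = v_k and w_k v_k = v_k w_k = p_k), and assume the spectra computed in B satisfy σ(w_k) ∩ σ(w_l) ⊆ {0} for k ≠ l. For each k let b_k ∈ B be selfadjoint with p_k b_k p_k = b_k, and assume that every projection q ∈ B with q = p_k q p_k, q w_k = w_k q, and q b_k = b_k q equals 0 or p_k. For 1 ≤ k < l ≤ n let c_{kl} ∈ B satisfy c_{kl} = p_k c_{kl} p_l, and assume c_{k,k+1} ≠ 0 for 1 ≤ k ≤ n−1. Set y₁ = w₁ + ⋯ + wₙ and y₂ = (b₁ + ⋯ + bₙ) + Σ_{1≤k<l≤n} (c_{kl} + c_{kl}*). Then every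 projection q ∈ B commuting with y₁ + i y₂ equals 0 or 1. -/
open Polynomial in
lemma intertwine_aux {B : Type*} [CStarAlgebra B] (a b x : B) (ha : IsSelfAdjoint a)
    (hb : IsSelfAdjoint b) (h : a * x = x * b) (f : ℝ → ℝ) 
    (hf : ContinuousOn f (spectrum ℝ a ∪ spectrum ℝ b)) :
    cfc f a * x = x * cfc f b := by
  have hpoly : ∀ P : ℝ[X], aeval a P * x = x * aeval b P := by
    intro P
    induction P using Polynomial.induction_on' with
    | add P Q hP hQ => simp only [map_add, add_mul, mul_add, hP, hQ]
    | monomial m r =>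
      have hm : a ^ m * x = x * b ^ m := (SemiconjBy.pow_right (a := x) (x := b) (y := a) h.symm m).symm
      simp only [aeval_monomial, ← Algebra.smul_def, smul_mul_assoc, mul_smul_comm, hm]
  set K := spectrum ℝ a ∪ spectrum ℝ b with hK
  have hKc : IsCompact K := (spectrum.isCompact a).union (spectrum.isCompact b)
  have hfa : ContinuousOn f (spectrum ℝ a) := hf.mono Set.subset_union_left
  have hfb : ContinuousOn f (spectrum ℝ b) := hf.mono Set.subset_union_right
  obtain ⟨M, hM⟩ := (hKc.isBounded).subset_closedBall 0
  rw [Real.closedBall_eq_Icc] at hM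
  haveI : CompactSpace K := isCompact_iff_compactSpace.mp hKc
  have happ : ∀ ε > 0, ∃ P : ℝ[X], ∀ t ∈ K, |f t - P.eval t| ≤ ε := by
    intro ε hε
    have hd := ContinuousMap.subalgebra_topologicalClosure_eq_top_of_separatesPoints
      (polynomialFunctions K) (polynomialFunctions_separatesPoints K)
    obtain ⟨⟨g, hg⟩, hgε⟩ := 
      ContinuousMap.exists_mem_subalgebra_near_continuous_of_separatesPoints
      (polynomialFunctions K) (polynomialFunctions_separatesPoints K) (K.domRestrict f)
      hf.domRestrict ε hε
    have hh := hg
    obtain ⟨P, -, hP⟩ := hh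
    refine ⟨P, fun t ht => ?_⟩
    have := hgε ⟨t, ht⟩
    rw [abs_sub_comm]
    simp only [← hP] at this
    exact this.le
  rw [← sub_eq_zero, ← norm_le_zero_iff]
  refine le_of_forall_pos_le_add fun δ hδ => ?_
  rw [zero_add]
  obtain ⟨P, hP⟩ := happ (δ / (2 * (‖x‖ + 1))) (by positivity)
  set ε := δ / (2 * (‖x‖ + 1)) with hε
  have hε0 : 0 < ε := by positivity
  have key : ∀ d : B, IsSelfAdjoint d → spectrum ℝ d ⊆ K → ‖cfc f d - aeval d P‖ ≤ ε := by
    intro d hd hs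
    rw [← cfc_polynomial P d hd, ← cfc_sub f P.eval d (hf.mono hs) P.continuous.continuousOn]
    exact norm_cfc_le hε0.le fun t ht => hP t (hs ht)
  have e : cfc f a * x - x * cfc f b
      = (cfc f a - aeval a P) * x - x * (cfc f b - aeval b P) := by
    rw [sub_mul, mul_sub, hpoly]; abel
  rw [e]
  have h1 := key a ha Set.subset_union_left
  have h2 := key b hb Set.subset_union_right
  calc _ ≤ ‖(cfc f a - aeval a P) * x‖ + ‖x * (cfc f b - aeval b P)‖ := norm_sub_le _ _
    _ ≤ ε * ‖x‖ + ‖x‖ * ε := by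
      gcongr
      · exact (norm_mul_le _ _).trans (by gcongr)
      · exact (norm_mul_le _ _).trans (by gcongr)
    _ ≤ ε * (2 * (‖x‖ + 1)) := by nlinarith
    _ = δ := by rw [hε]; field_simp

lemma sylvester_aux {B : Type*} [CStarAlgebra B] (a b x : B) (ha : IsSelfAdjoint a)
    (hb : IsSelfAdjoint b) (h : a * x = x * b)
    (hs : spectrum ℂ a ∩ spectrum ℂ b ⊆ {0}) : a * x = 0 := by
  classical
  have hs' : ∀ t, t ∈ spectrum ℝ a → t ∈ spectrum ℝ b → t = 0 := by
    intro t h1 h2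
    have h1' := spectrum.algebraMap_mem ℂ h1
    have h2' := spectrum.algebraMap_mem ℂ h2
    simpa using hs ⟨h1', h2'⟩
  let f : ℝ → ℝ := fun t => if t ∈ spectrum ℝ b then 0 else t
  have hfa : Set.EqOn f id (spectrum ℝ a) := by
    intro t ht
    by_cases h2 : t ∈ spectrum ℝ b
    · simp [f, h2, hs' t ht h2]
    · simp [f, h2]
  have hfb : Set.EqOn f (fun _ => 0) (spectrum ℝ b) := by
    intro t ht
    simp [f, ht]
  have hc : ContinuousOn f (spectrum ℝ a ∪ spectrum ℝ b) :=
    ContinuousOn.union_of_isClosed (continuousOn_id.congr hfa) (continuousOn_const.congr hfb)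
      (spectrum.isClosed a) (spectrum.isClosed b)
  have := intertwine_aux a b x ha hb h f hc
  rw [cfc_congr hfa, cfc_congr hfb, cfc_id ℝ a, cfc_const_zero, mul_zero] at this
  exact this


/-- An element `y₁ + i y₂` built from corner-irreducible selfadjoint
pieces with pairwise almost-disjoint spectra, joined by nonzero off-diagonal
connectors, commutes with no nontrivial projection. -/
theorem no_nontrivial_commuting_projection_of_linked_corners
    {B : Type*} [NormedRing B] [StarRing B] [CStarRing B] [CompleteSpace B]
    [NormedAlgebra ℂ B] [StarModule ℂ B]
    (n : ℕ) (hn : 1 ≤ n) (p : Fin n → B)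
    (hp_sa : ∀ k, star (p k) = p k)
    (hp_idem : ∀ k, p k * p k = p k)
    (hp_orth : ∀ k l, k ≠ l → p k * p l = 0)
    (hp_sum : ∑ k, p k = 1)
    (w : Fin n → B)
    (hw_sa : ∀ k, star (w k) = w k)
    (hw_corner : ∀ k, p k * w k * p k = w k)
    (hw_inv : ∀ k, ∃ v : B, p k * v * p k = v ∧ w k * v = p k ∧ v * w k = p k)
    (hw_spec : ∀ k l, k ≠ l → spectrum ℂ (w k) ∩ spectrum ℂ (w l) ⊆ {0})
    (b : Fin n → B)
    (hb_sa : ∀ k, star (b k) = b k)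
    (hb_corner : ∀ k, p k * b k * p k = b k)
    (h_irr : ∀ k, ∀ q : B, star q = q → q * q = q → q = p k * q * p k →
      q * w k = w k * q → q * b k = b k * q → q = 0 ∨ q = p k)
    (c : Fin n → Fin n → B)
    (hc_corner : ∀ k l, k < l → c k l = p k * c k l * p l)
    (hc_ne : ∀ k : Fin n, ∀ h : (k : ℕ) + 1 < n, c k ⟨(k : ℕ) + 1, h⟩ ≠ 0) :
    ∀ q : B, star q = q → q * q = q →
      q * ((∑ k, w k) + Complex.I •
          ((∑ k, b k) + ∑ k, ∑ l, if k < l then c k l + star (c k l) else 0)) =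
        ((∑ k, w k) + Complex.I •
          ((∑ k, b k) + ∑ k, ∑ l, if k < l then c k l + star (c k l) else 0)) * q →
      q = 0 ∨ q = 1 := by
  classical
  letI : CStarAlgebra B := { }
  intro q hq_sa hq_idem hq
  set y₁ := ∑ k, w k with hy₁
  set S := ∑ k, ∑ l, if k < l then c k l + star (c k l) else 0 with hS
  set y₂ := (∑ k, b k) + S with hy₂
  have y₁sa : star y₁ = y₁ := by simp [hy₁, star_sum, hw_sa]
  have Ssa : star S = S := by
    simp only [hS, star_sum]
    refine Finset.sum_congr rfl fun i _ => Finset.sum_congr rfl fun j _ => ?_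
    split_ifs
    · rw [star_add, star_star, add_comm]
    · simp
  have y₂sa : star y₂ = y₂ := by simp [hy₂, star_sum, hb_sa, Ssa]
  have hq' := congrArg star hq
  simp only [star_mul, star_add, star_smul, y₁sa, y₂sa, hq_sa, Complex.star_def, Complex.conj_I,
    mul_add, add_mul, neg_smul, mul_neg, neg_mul, mul_smul_comm, smul_mul_assoc] at hq hq'
  have h1 : q * y₁ = y₁ * q := by
    linear_combination (norm := module) (2:ℂ)⁻¹ • hq - (2:ℂ)⁻¹ • hq'
  have h2 : q * y₂ = y₂ * q := by
    have : Complex.I • (q * y₂) = Complex.I • (y₂ * q) := by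
      rw [h1] at hq
      exact add_left_cancel hq
    exact smul_right_injective B Complex.I_ne_zero this
  -- corner computations
  have pl : ∀ (d : Fin n → B), (∀ k, p k * d k * p k = d k) →
      ∀ k, p k * ∑ j, d j = d k := by
    intro d hd k
    rw [Finset.mul_sum, Finset.sum_eq_single k]
    · rw [← hd k, ← mul_assoc, ← mul_assoc, hp_idem]
    · intro j _ hj
      rw [← hd j, ← mul_assoc, ← mul_assoc, hp_orth k j hj.symm, zero_mul, zero_mul]
    · simp
  have pr : ∀ (d : Fin n → B), (∀ k, p k * d k * p k = d k) →
      ∀ k, (∑ j, d j) * p k = d k := by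
    intro d hd k
    rw [Finset.sum_mul, Finset.sum_eq_single k]
    · rw [← hd k, mul_assoc, hp_idem]
    · intro j _ hj
      rw [← hd j, mul_assoc, hp_orth j k hj, mul_zero]
    · simp
  have hpw : ∀ k, p k * w k = w k := fun k => by
    rw [← hw_corner k, ← mul_assoc, ← mul_assoc, hp_idem]
  have hcl : ∀ k i j, i < j → k ≠ i → p k * c i j = 0 := by
    intro k i j hij hk
    rw [hc_corner i j hij, ← mul_assoc, ← mul_assoc, hp_orth k i hk, zero_mul, zero_mul]
  have hcr : ∀ k i j, i < j → k ≠ j → c i j * p k = 0 := by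
    intro k i j hij hk
    rw [hc_corner i j hij, mul_assoc, hp_orth j k hk.symm, mul_zero]
  have hsl : ∀ k i j, i < j → k ≠ j → p k * star (c i j) = 0 := by
    intro k i j hij hk
    have := congrArg star (hcr k i j hij hk)
    simpa [hp_sa] using this
  have hsr : ∀ k i j, i < j → k ≠ i → star (c i j) * p k = 0 := by
    intro k i j hij hk
    have := congrArg star (hcl k i j hij hk)
    simpa [hp_sa] using this
  have hSexp : ∀ k l, p k * S * p l =
      ∑ i, ∑ j, p k * (if i < j then c i j + star (c i j) else 0) * p l := by
    intro k l
    simp only [hS, Finset.mul_sum, Finset.sum_mul]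
  have hSkk : ∀ k, p k * S * p k = 0 := by
    intro k
    rw [hSexp]
    refine Finset.sum_eq_zero fun i _ => Finset.sum_eq_zero fun j _ => ?_
    split_ifs with hij
    · rw [mul_add, add_mul]
      by_cases hki : k = i
      · have hkj : k ≠ j := by rintro rfl; exact absurd hij (hki ▸ lt_irrefl _)
        rw [mul_assoc, hcr k i j hij hkj, hsl k i j hij hkj]; simp
      · rw [hcl k i j hij hki, mul_assoc, hsr k i j hij hki]; simp
    · simp
  have hSkl : ∀ k l, k < l → p k * S * p l = c k l := by
    intro k l hkl
    rw [hSexp, Finset.sum_eq_single k, Finset.sum_eq_single l]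
    · rw [if_pos hkl, mul_add, add_mul, ← hc_corner k l hkl, hsl k k l hkl hkl.ne]; simp
    · intro j _ hj
      split_ifs with hij
      · rw [mul_add, add_mul, mul_assoc, hcr l k j hij hj.symm, hsl k k j hij hij.ne]; simp
      · simp
    · simp
    · intro i _ hi
      refine Finset.sum_eq_zero fun j _ => ?_
      split_ifs with hij
      · rw [mul_add, add_mul, hcl k i j hij hi.symm]
        by_cases hkj : k = j
        · have : l ≠ i := by rintro rfl; subst hkj; exact absurd hij hkl.asymm
          rw [mul_assoc, hsr l i j hij this]; simp
        · rw [hsl k i j hij hkj]; simp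
      · simp
    · simp
  -- off-diagonal blocks of q vanish
  have hoff : ∀ k l, k ≠ l → p k * q * p l = 0 := by
    intro k l hkl
    have e : w k * (p k * q * p l) = (p k * q * p l) * w l := by
      have e1 : w k * p k = w k := by rw [← hw_corner k, mul_assoc, hp_idem]
      calc w k * (p k * q * p l) = (w k * p k) * q * p l := by simp only [mul_assoc]
        _ = (p k * y₁) * q * p l := by rw [e1, pl w hw_corner]
        _ = p k * (y₁ * q) * p l := by simp only [mul_assoc]
        _ = p k * q * (y₁ * p l) := by rw [← h1]; simp only [mul_assoc]
        _ = (p k * q * p l) * w l := by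
          rw [pr w hw_corner, mul_assoc (p k * q) (p l), hpw]
    have z := sylvester_aux (w k) (w l) _ (hw_sa k) (hw_sa l) e (hw_spec k l hkl)
    obtain ⟨v, -, -, hv⟩ := hw_inv k
    have := congrArg (v * ·) z
    simp only [mul_zero] at this
    rw [← mul_assoc, hv] at this
    rwa [← mul_assoc, ← mul_assoc, hp_idem] at this
  have hql : ∀ k, p k * q = p k * q * p k := by
    intro k
    conv_lhs => rw [← mul_one (p k * q), ← hp_sum, Finset.mul_sum]
    rw [Finset.sum_eq_single k]
    · intro j _ hj; exact hoff k j hj.symm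
    · simp
  have hqr : ∀ k, q * p k = p k * q * p k := by
    intro k
    conv_lhs => rw [← one_mul (q * p k), ← hp_sum, Finset.sum_mul]
    rw [Finset.sum_eq_single k]
    · rw [mul_assoc]
    · intro j _ hj; rw [← mul_assoc]; exact hoff j k hj
    · simp
  have hcomm : ∀ k, q * p k = p k * q := fun k => (hqr k).trans (hql k).symm
  have hbk : ∀ k, p k * y₂ * p k = b k := by
    intro k
    rw [hy₂, mul_add, add_mul, hSkk, pl b hb_corner, add_zero, ← hb_corner k, mul_assoc, hp_idem]
  have hckl : ∀ k l, k < l → p k * y₂ * p l = c k l := by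
    intro k l hkl
    rw [hy₂, mul_add, add_mul, hSkl k l hkl, pl b hb_corner, ← hb_corner k, mul_assoc,
      hp_orth k l hkl.ne, mul_zero, zero_add]
  have hqw : ∀ k, q * w k = w k * q := by
    intro k
    rw [← pl w hw_corner k, ← mul_assoc, hcomm, mul_assoc, h1, mul_assoc]
  have hqy : ∀ k l, q * (p k * y₂ * p l) = (p k * y₂ * p l) * q := by
    intro k l
    rw [← mul_assoc, ← mul_assoc, hcomm k, mul_assoc (p k) q, h2, mul_assoc _ (p l) q, ← hcomm l]
    simp only [mul_assoc]
  have hdich : ∀ k, q * p k = 0 ∨ q * p k = p k := by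
    intro k
    have hbp : p k * b k = b k := by
      rw [← hb_corner k, ← mul_assoc, ← mul_assoc, hp_idem]
    have hbp' : b k * p k = b k := by rw [← hb_corner k, mul_assoc, hp_idem]
    have hwp' : w k * p k = w k := by rw [← hw_corner k, mul_assoc, hp_idem]
    apply h_irr k
    · rw [star_mul, hq_sa, hp_sa, hcomm]
    · rw [mul_assoc, ← mul_assoc (p k), ← hcomm k, mul_assoc q (p k), hp_idem, ← mul_assoc, hq_idem]
    · rw [hqr k]; simp only [mul_assoc, hp_idem]; simp only [← mul_assoc, hp_idem]
    · rw [mul_assoc, hpw, hcomm, ← mul_assoc, hwp', hqw]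
    · have := hqy k k
      rw [hbk] at this
      rw [mul_assoc, hbp, hcomm, ← mul_assoc, hbp', this]
  have hstep : ∀ k : Fin n, ∀ h : (k : ℕ) + 1 < n,
      (q * p k = 0 ↔ q * p ⟨k + 1, h⟩ = 0) := by
    intro k h
    set l : Fin n := ⟨k + 1, h⟩ with hl
    have hkl : k < l := by simp [hl, Fin.lt_def]
    have hne : c k l ≠ 0 := hc_ne k h
    have hcc := hqy k l
    rw [hckl k l hkl] at hcc
    have e1 : q * p k * c k l = q * c k l := by
      rw [hc_corner k l hkl]; simp only [← mul_assoc]; rw [mul_assoc q, hp_idem]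
    have e2 : c k l * (q * p l) = q * c k l := by
      rw [← mul_assoc, ← hcc, hc_corner k l hkl]; simp only [mul_assoc, hp_idem]
    have f1 : p k * c k l = c k l := by
      rw [hc_corner k l hkl]; simp only [← mul_assoc, hp_idem]
    have f2 : c k l * p l = c k l := by
      rw [hc_corner k l hkl]; simp only [mul_assoc, hp_idem]
    constructor
    · intro hk
      rcases hdich l with h0 | h0
      · exact h0
      · rw [hk, zero_mul] at e1
        rw [h0, f2, ← e1] at e2
        exact absurd e2 hne
    · intro hk
      rcases hdich k with h0 | h0
      · exact h0
      · rw [hk, mul_zero] at e2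
        rw [h0, f1, ← e2] at e1
        exact absurd e1 hne
  have hall : ∀ m : ℕ, ∀ hm : m < n, (q * p ⟨0, hn⟩ = 0 ↔ q * p ⟨m, hm⟩ = 0) := by
    intro m
    induction m with
    | zero => intro hm; rfl
    | succ m ih => intro hm; exact (ih (by omega)).trans (hstep ⟨m, by omega⟩ hm)
  have hsumq : q = ∑ k, q * p k := by rw [← Finset.mul_sum, hp_sum, mul_one]
  by_cases h0 : q * p ⟨0, hn⟩ = 0
  · left
    rw [hsumq]
    exact Finset.sum_eq_zero fun k _ => (hall k k.2).1 h0
  · right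
    rw [hsumq, ← hp_sum]
    refine Finset.sum_congr rfl fun k _ => ?_
    exact (hdich k).resolve_left fun hk => h0 ((hall k k.2).2 hk)
end
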